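/- arXiv:2012.14175 — 6 statements merged into one kernel-verified Lean document; each statement's English description precedes it below -/
import Mathlib

section
/- Let A and B be non-empty closed discrete subsets of ℂ. If f is an A-continuable holomorphic germ at 0 and g is a B-continuable holomorphic germ at 0, then the set Ω := {0} ∪ (A·B) is a closed discrete subset of ℂ and the Hadamard product f ⊙ g is an Ω-continuable germ. -/
open scoped Pointwise
open Filter

/-- The sum of a power series with coefficients `a`. -/
noncomputable def seriesSum (a : ℕ → ℂ) (ξ : ℂ) : ℂ := ∑' n, a n * ξ ^ n

/-- The radius of convergence of the power series with coefficients `a`. -/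
noncomputable def radiusOf (a : ℕ → ℂ) : ENNReal :=
  (FormalMultilinearSeries.ofScalars ℂ a).radius

/-- `F` is an analytic continuation of the germ `f` (at `γ 0`) along the path `γ : [0,1] → ℂ`:
a family of germs `F t` at `γ t`, starting from `f`, which is locally consistent. -/
def AnalyticContinuationAlong (f : ℂ → ℂ) (γ : ℝ → ℂ) (F : ℝ → ℂ → ℂ) : Prop :=
  (∀ t ∈ Set.Icc (0:ℝ) 1, AnalyticAt ℂ (F t) (γ t)) ∧
  (F 0 =ᶠ[nhds (γ 0)] f) ∧
  ∀ t ∈ Set.Icc (0:ℝ) 1, ∀ᶠ s in nhdsWithin t (Set.Icc (0:ℝ) 1), F s =ᶠ[nhds (γ s)] F t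

/-- The power series with coefficients `a` defines an `Ω`-continuable germ at `0`:
it has positive radius of convergence, and its sum admits analytic continuation along
every path `γ : [0,1] → ℂ ∖ Ω` whose initial point lies in the disc of convergence. -/
def ContinuableGerm (Ω : Set ℂ) (a : ℕ → ℂ) : Prop :=
  0 < radiusOf a ∧
  ∀ γ : ℝ → ℂ, ContinuousOn γ (Set.Icc 0 1) →
    (∀ t ∈ Set.Icc (0:ℝ) 1, γ t ∉ Ω) →
    (‖γ 0‖₊ : ENNReal) < radiusOf a →
    ∃ F : ℝ → ℂ → ℂ, AnalyticContinuationAlong (seriesSum a) γ F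


namespace HadamardCont
open Set Metric Topology

lemma germ_iff {f g : ℂ → ℂ} {x : ℂ} (hf : AnalyticAt ℂ f x) (hg : AnalyticAt ℂ g x) :
    ∀ᶠ y in 𝓝 x, (f =ᶠ[𝓝 y] g ↔ f =ᶠ[𝓝 x] g) := by
  rcases hf.eventually_eq_or_eventually_ne hg with h | h
  · filter_upwards [eventually_eventually_nhds.mpr h] with y hy
    exact ⟨fun _ => h, fun _ => hy⟩
  · rw [eventually_nhdsWithin_iff] at h
    filter_upwards [h] with y hy
    by_cases hyx : y = x
    · rw [hyx]
    · have h1 := hy hyx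
      refine ⟨fun h2 => absurd h2.eq_of_nhds h1, fun h2 => ?_⟩
      exfalso
      obtain ⟨z, hz⟩ := ((((eventually_nhdsWithin_iff.mpr h).and
        (h2.filter_mono nhdsWithin_le_nhds))).exists (f := 𝓝[≠] x))
      exact hz.1 hz.2

lemma cont_unique {f : ℂ → ℂ} {γ : ℝ → ℂ} {F F' : ℝ → ℂ → ℂ}
    (hγ : ContinuousOn γ (Icc 0 1))
    (h : AnalyticContinuationAlong f γ F) (h' : AnalyticContinuationAlong f γ F') :
    ∀ t ∈ Icc (0:ℝ) 1, F t =ᶠ[𝓝 (γ t)] F' t := by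
  obtain ⟨h1, h2, h3⟩ := h
  obtain ⟨h1', h2', h3'⟩ := h'
  have key := fun {x y : ℝ} (hx : x ∈ Icc (0:ℝ) 1) (hy : y ∈ Icc (0:ℝ) 1) =>
    (isPreconnected_Icc (a := (0:ℝ)) (b := 1)).induction₂
    (fun s t => (F s =ᶠ[𝓝 (γ s)] F' s ↔ F t =ᶠ[𝓝 (γ t)] F' t)) (fun t ht => by
      have hc := (hγ t ht).eventually (germ_iff (h1 t ht) (h1' t ht))
      filter_upwards [hc, h3 t ht, h3' t ht] with s a b c
      constructor
      · intro hh
        exact b.trans ((a.2 hh).trans c.symm)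
      · intro hh
        exact a.1 (b.symm.trans (hh.trans c)))
      (fun _ _ _ _ _ _ a b => a.trans b) (fun _ _ _ _ a => a.symm) hx hy
  intro t ht
  exact (key (left_mem_Icc.2 zero_le_one) ht).1 (h2.trans h2'.symm)

lemma germ_spread {U : Set ℂ} (hU : IsOpen U) (hc : Convex ℝ U) {f g : ℂ → ℂ}
    (hf : DifferentiableOn ℂ f U) (hg : DifferentiableOn ℂ g U) {x y : ℂ} (hx : x ∈ U)
    (hfg : f =ᶠ[𝓝 x] g) (hy : y ∈ U) : f =ᶠ[𝓝 y] g := by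
  have := (hf.analyticOnNhd hU).eqOn_of_preconnected_of_eventuallyEq (hg.analyticOnNhd hU)
    hc.isPreconnected hx hfg
  filter_upwards [hU.mem_nhds hy] with z hz using this hz

lemma exists_uniform {f : ℂ → ℂ} {γ : ℝ → ℂ} {F : ℝ → ℂ → ℂ}
    (hγ : ContinuousOn γ (Icc 0 1)) (h : AnalyticContinuationAlong f γ F) :
    ∃ ε > 0, ∃ G : ℝ → ℂ → ℂ, (∀ t ∈ Icc (0:ℝ) 1, DifferentiableOn ℂ (G t) (ball (γ t) ε)) ∧
      ∀ t ∈ Icc (0:ℝ) 1, G t =ᶠ[𝓝 (γ t)] F t := by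
  have key : ∃ ε > 0, ∀ t ∈ Icc (0:ℝ) 1, ∃ g : ℂ → ℂ, DifferentiableOn ℂ g (ball (γ t) ε) ∧
      g =ᶠ[𝓝 (γ t)] F t := by
    refine isCompact_Icc.induction_on (p := fun s => ∃ ε > 0, ∀ t ∈ s, ∃ g : ℂ → ℂ,
      DifferentiableOn ℂ g (ball (γ t) ε) ∧ g =ᶠ[𝓝 (γ t)] F t) ⟨1, one_pos, by simp⟩ ?_ ?_ ?_
    · rintro s t hst ⟨ε, hε, H⟩
      exact ⟨ε, hε, fun x hx => H x (hst hx)⟩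
    · rintro s t ⟨ε, hε, H⟩ ⟨ε', hε', H'⟩
      refine ⟨min ε ε', lt_min hε hε', ?_⟩
      rintro x (hx | hx)
      · obtain ⟨g, hg, hg'⟩ := H x hx
        exact ⟨g, hg.mono (ball_subset_ball (min_le_left _ _)), hg'⟩
      · obtain ⟨g, hg, hg'⟩ := H' x hx
        exact ⟨g, hg.mono (ball_subset_ball (min_le_right _ _)), hg'⟩
    · intro t ht
      obtain ⟨r, hr, hr'⟩ := (h.1 t ht).exists_ball_analyticOnNhd
      have h4 := (hγ t ht).eventually (ball_mem_nhds (γ t) (half_pos hr))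
      refine ⟨_, (h.2.2 t ht).and h4, r / 2, half_pos hr, ?_⟩
      rintro s ⟨hs1, hs2⟩
      refine ⟨F t, hr'.differentiableOn.mono ?_, hs1.symm⟩
      apply ball_subset_ball'
      have := mem_ball.1 hs2
      linarith
  obtain ⟨ε, hε, H⟩ := key
  choose! G hG using H
  exact ⟨ε, hε, G, fun t ht => (hG t ht).1, fun t ht => (hG t ht).2⟩

lemma tube {f : ℂ → ℂ} {γ : ℝ → ℂ} {F G : ℝ → ℂ → ℂ} {ε : ℝ} (hε : 0 < ε)
    (hγ : ContinuousOn γ (Icc 0 1)) (h : AnalyticContinuationAlong f γ F)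
    (hG : ∀ t ∈ Icc (0:ℝ) 1, DifferentiableOn ℂ (G t) (ball (γ t) ε))
    (hGF : ∀ t ∈ Icc (0:ℝ) 1, G t =ᶠ[𝓝 (γ t)] F t)
    {γ' : ℝ → ℂ} (hγ' : ContinuousOn γ' (Icc 0 1)) (h0 : γ' 0 = γ 0)
    (hd : ∀ t ∈ Icc (0:ℝ) 1, dist (γ' t) (γ t) < ε) :
    AnalyticContinuationAlong f γ' G := by
  have z0 : (0:ℝ) ∈ Icc (0:ℝ) 1 := left_mem_Icc.2 zero_le_one
  refine ⟨fun t ht => (hG t ht).analyticAt (isOpen_ball.mem_nhds (hd t ht)), ?_, ?_⟩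
  · rw [h0]
    exact (hGF 0 z0).trans h.2.1
  · intro t ht
    have e1 := (hγ t ht).eventually (ball_mem_nhds (γ t) hε)
    have e2 := (hγ' t ht).eventually (isOpen_ball.mem_nhds (hd t ht))
    have e3 := (hγ t ht).eventually (eventually_eventually_nhds.mpr (hGF t ht))
    filter_upwards [e1, e2, e3, h.2.2 t ht, self_mem_nhdsWithin] with s a b c d hs
    have : G s =ᶠ[𝓝 (γ s)] G t := (hGF s hs).trans (d.trans (EventuallyEq.symm c))
    exact germ_spread (isOpen_ball.inter isOpen_ball) ((convex_ball _ _).inter (convex_ball _ _))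
      ((hG s hs).mono inter_subset_left) ((hG t ht).mono inter_subset_right)
      ⟨mem_ball_self hε, a⟩ this ⟨hd s hs, b⟩

/-- The germ of `φ` at `z` can be continued along all paths avoiding `S`. -/
def Good (S : Set ℂ) (z : ℂ) (φ : ℂ → ℂ) : Prop :=
  ∀ γ : ℝ → ℂ, ContinuousOn γ (Icc 0 1) → γ 0 = z → (∀ t ∈ Icc (0:ℝ) 1, γ t ∉ S) →
    ∃ F : ℝ → ℂ → ℂ, AnalyticContinuationAlong φ γ F

lemma Good.congr {S : Set ℂ} {z : ℂ} {φ ψ : ℂ → ℂ} (h : Good S z φ) (e : φ =ᶠ[𝓝 z] ψ) :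
    Good S z ψ := by
  intro γ h1 h2 h3
  obtain ⟨F, a, b, c⟩ := h γ h1 h2 h3
  refine ⟨F, a, b.trans ?_, c⟩
  rw [h2]; exact e

lemma seg_continuous (z x : ℂ) : Continuous (fun t : ℝ => z + t * (x - z)) := by fun_prop

lemma seg_mem {V : Set ℂ} (hV : Convex ℝ V) {z x : ℂ} (hz : z ∈ V) (hx : x ∈ V) {t : ℝ}
    (ht : t ∈ Icc (0:ℝ) 1) : z + t * (x - z) ∈ V := by
  have := hV.add_smul_sub_mem hz hx ht
  simpa using this

lemma const_cont {V : Set ℂ} (hV : IsOpen V) {φ : ℂ → ℂ} (hφ : DifferentiableOn ℂ φ V)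
    {γ : ℝ → ℂ} (hγ : ∀ t ∈ Icc (0:ℝ) 1, γ t ∈ V) :
    AnalyticContinuationAlong φ γ (fun _ => φ) :=
  ⟨fun t ht => hφ.analyticAt (hV.mem_nhds (hγ t ht)), EventuallyEq.rfl,
    fun _ _ => Eventually.of_forall fun _ => EventuallyEq.rfl⟩

lemma Good.extend {S : Set ℂ} {z : ℂ} {φ : ℂ → ℂ} (h : Good S z φ) {R : ℝ} (hR : 0 < R)
    (hS : ∀ x ∈ ball z R, x ∉ S) :
    ∃ Φ : ℂ → ℂ, DifferentiableOn ℂ Φ (ball z R) ∧ Φ =ᶠ[𝓝 z] φ := by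
  have H : ∀ x ∈ ball z R, ∃ F, AnalyticContinuationAlong φ (fun t : ℝ => z + t * (x - z)) F := by
    intro x hx
    refine h _ (seg_continuous z x).continuousOn (by simp) ?_
    intro t ht
    exact hS _ (seg_mem (convex_ball _ _) (mem_ball_self hR) hx ht)
  choose! F hF using H
  have o1 : (1:ℝ) ∈ Icc (0:ℝ) 1 := right_mem_Icc.2 zero_le_one
  have loc : ∀ x ∈ ball z R, ∃ g : ℂ → ℂ, AnalyticAt ℂ g x ∧
      (∀ᶠ x' in 𝓝 x, F x' 1 x' = g x') ∧ g =ᶠ[𝓝 x] F x 1 := by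
    intro x hx
    obtain ⟨ε, hε, G, hG1, hG2⟩ := exists_uniform (seg_continuous z x).continuousOn (hF x hx)
    have g2 := hG2 1 o1
    have g1 := hG1 1 o1
    simp only [Complex.ofReal_one, one_mul, add_sub_cancel] at g1 g2
    refine ⟨G 1, g1.analyticAt (ball_mem_nhds x hε), ?_, g2⟩
    filter_upwards [ball_mem_nhds x hε, isOpen_ball.mem_nhds hx] with x' hx' hxR
    have ht := tube hε (seg_continuous z x).continuousOn (hF x hx) hG1 hG2
      (seg_continuous z x').continuousOn (by simp) (fun t ht => by
        rw [dist_eq_norm]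
        have : z + (t:ℂ) * (x' - z) - (z + t * (x - z)) = t * (x' - x) := by ring
        rw [this, norm_mul, Complex.norm_real, Real.norm_of_nonneg ht.1]
        have h1 : ‖x' - x‖ < ε := by rw [← dist_eq_norm]; exact hx'
        nlinarith [ht.2, norm_nonneg (x' - x)])
    have := (cont_unique (seg_continuous z x').continuousOn (hF x' hxR) ht 1 o1).eq_of_nhds
    simpa using this
  refine ⟨fun x => F x 1 x, ?_, ?_⟩
  · intro x hx
    obtain ⟨g, hg, hg', _⟩ := loc x hx
    exact (hg.differentiableAt.congr_of_eventuallyEq hg').differentiableWithinAt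
  · obtain ⟨g, hg, hg', hg''⟩ := loc z (mem_ball_self hR)
    refine EventuallyEq.trans hg' (hg''.trans ?_)
    have hz := hF z (mem_ball_self hR)
    have a0 := hz.1 0 (left_mem_Icc.2 zero_le_one)
    have e0 := hz.2.1
    simp only [Complex.ofReal_zero, zero_mul, add_zero] at a0 e0
    have a1 : AnalyticAt ℂ φ z := a0.congr e0
    have hcc : AnalyticContinuationAlong φ (fun t : ℝ => z + t * (z - z)) (fun _ => φ) :=
      ⟨fun t ht => by simpa using a1, EventuallyEq.rfl,
        fun _ _ => Eventually.of_forall fun _ => EventuallyEq.rfl⟩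
    have := cont_unique (seg_continuous z z).continuousOn hz hcc 1 o1
    simpa using this

/-- Moving the base point of a good germ along a segment. -/
lemma Good.move {S V : Set ℂ} (hV : IsOpen V) {z z' : ℂ} {φ : ℂ → ℂ}
    (h : Good S z φ) (hφ : DifferentiableOn ℂ φ V)
    (hseg : ∀ t ∈ Icc (0:ℝ) 1, z + t * (z' - z) ∈ V)
    (hsegS : ∀ t ∈ Icc (0:ℝ) 1, z + t * (z' - z) ∉ S) : Good S z' φ := by
  intro γ hγ h0 hS
  set c : ℝ → ℂ := fun t => if t ≤ 1 / 2 then z + ((2 * t : ℝ) : ℂ) * (z' - z) else γ (2 * t - 1)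
    with hc
  have c1 : ∀ t ∈ Icc (0:ℝ) 1, c (t / 2) = z + t * (z' - z) := by
    intro t ht
    have : t / 2 ≤ 1 / 2 := by linarith [ht.2]
    simp only [hc, if_pos this]
    congr 2
    push_cast; ring
  have c2 : ∀ t ∈ Icc (0:ℝ) 1, c ((1 + t) / 2) = γ t := by
    intro t ht
    by_cases h' : t = 0
    · subst h'
      simp [hc, h0]
    · have h1 : 0 < t := lt_of_le_of_ne ht.1 (Ne.symm h')
      have : ¬ ((1 + t) / 2 ≤ 1 / 2) := by linarith
      simp only [hc, if_neg this]
      congr 1; ring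
  have cc : ContinuousOn c (Icc 0 1) := by
    have : Icc (0:ℝ) 1 = Icc 0 (1/2) ∪ Icc (1/2) 1 := by
      rw [Icc_union_Icc_eq_Icc] <;> norm_num
    rw [this]
    apply ContinuousOn.union_of_isClosed _ _ isClosed_Icc isClosed_Icc
    · have hh : ContinuousOn (fun t : ℝ => z + ((2 * t : ℝ) : ℂ) * (z' - z)) (Icc 0 (1/2)) := by
        fun_prop
      refine hh.congr fun t ht => ?_
      simp only [hc, if_pos ht.2]
    · have hh : ContinuousOn (fun t : ℝ => γ (2 * t - 1)) (Icc (1/2) 1) :=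
        hγ.comp (by fun_prop) (fun t ht => ⟨by linarith [ht.1], by linarith [ht.2]⟩)
      refine hh.congr fun t ht => ?_
      have := c2 (2 * t - 1) ⟨by linarith [ht.1], by linarith [ht.2]⟩
      simp only []
      rw [← this]
      congr 1; ring
  obtain ⟨F, F1, F2, F3⟩ := h c cc (by simp [hc]) (by
    intro t ht
    rcases le_total t (1/2) with h' | h'
    · have := c1 (2 * t) ⟨by linarith [ht.1], by linarith⟩
      rw [show 2 * t / 2 = t by ring] at this
      rw [this]
      exact hsegS _ ⟨by linarith [ht.1], by linarith⟩
    · have := c2 (2 * t - 1) ⟨by linarith, by linarith [ht.2]⟩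
      rw [show (1 + (2 * t - 1)) / 2 = t by ring] at this
      rw [this]
      exact hS _ ⟨by linarith [ht.1], by linarith [ht.2]⟩)
  have repar : ∀ (p : ℝ → ℝ), Continuous p → (∀ t ∈ Icc (0:ℝ) 1, p t ∈ Icc (0:ℝ) 1) →
      ∀ t ∈ Icc (0:ℝ) 1, ∀ᶠ s in 𝓝[Icc 0 1] t, F (p s) =ᶠ[𝓝 (c (p s))] F (p t) := by
    intro p hp hp' t ht
    have : Tendsto p (𝓝[Icc 0 1] t) (𝓝[Icc 0 1] (p t)) :=
      tendsto_nhdsWithin_of_tendsto_nhds_of_eventually_within _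
        (hp.continuousAt.tendsto.mono_left nhdsWithin_le_nhds)
        (by filter_upwards [self_mem_nhdsWithin] with s hs using hp' s hs)
    exact this.eventually (F3 (p t) (hp' t ht))
  have o1 : (1:ℝ) ∈ Icc (0:ℝ) 1 := right_mem_Icc.2 zero_le_one
  have o0 : (0:ℝ) ∈ Icc (0:ℝ) 1 := left_mem_Icc.2 zero_le_one
  have P1 : ∀ t ∈ Icc (0:ℝ) 1, t / 2 ∈ Icc (0:ℝ) 1 :=
    fun t ht => ⟨by linarith [ht.1], by linarith [ht.2]⟩
  have P2 : ∀ t ∈ Icc (0:ℝ) 1, (1 + t) / 2 ∈ Icc (0:ℝ) 1 :=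
    fun t ht => ⟨by linarith [ht.1], by linarith [ht.2]⟩
  have A1 : AnalyticContinuationAlong φ (fun t : ℝ => z + t * (z' - z)) (fun t => F (t / 2)) := by
    refine ⟨fun t ht => ?_, ?_, fun t ht => ?_⟩
    · simp only []
      rw [← c1 t ht]; exact F1 _ (P1 t ht)
    · have := F2
      simp only [zero_div]
      rw [← c1 0 o0, zero_div]
      exact this
    · filter_upwards [repar (fun t => t / 2) (by fun_prop) P1 t ht, self_mem_nhdsWithin] with s a b
      rw [← c1 s b]; exact a
  have U := cont_unique (seg_continuous z z').continuousOn A1 (const_cont hV hφ hseg) 1 o1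
  simp only [Complex.ofReal_one, one_mul, add_sub_cancel] at U
  refine ⟨fun t => F ((1 + t) / 2), fun t ht => ?_, ?_, fun t ht => ?_⟩
  · simp only []
    rw [← c2 t ht]; exact F1 _ (P2 t ht)
  · simp only [add_zero]
    rw [h0]; exact U
  · filter_upwards [repar (fun t => (1 + t) / 2) (by fun_prop) P2 t ht,
      self_mem_nhdsWithin] with s a b
    rw [← c2 s b]; exact a

end HadamardCont


namespace HadamardCont
open Set Metric Topology MeasureTheory

lemma param_diff {K : ℂ → ℝ → ℂ} {U : Set ℂ} (hU : IsOpen U)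
    (hc : ContinuousOn (fun q : ℂ × ℝ => K q.1 q.2) (U ×ˢ Icc 0 1))
    (hd : ∀ s ∈ Icc (0:ℝ) 1, DifferentiableOn ℂ (fun w => K w s) U) :
    DifferentiableOn ℂ (fun w => ∫ s in (0:ℝ)..1, K w s) U := by
  intro w0 hw0
  obtain ⟨ρ, hρ, hρU⟩ := nhds_basis_closedBall.mem_iff.1 (hU.mem_nhds hw0)
  have hKs : ∀ w ∈ U, ContinuousOn (K w) (Icc 0 1) := fun w hw =>
    hc.comp (f := fun s : ℝ => (w, s)) (by fun_prop) (fun s hs => ⟨hw, hs⟩)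
  obtain ⟨M, hM⟩ := ((isCompact_closedBall w0 ρ).prod isCompact_Icc).exists_bound_of_continuousOn
    (hc.mono (prod_mono hρU (Subset.refl _)))
  have hsub : uIoc (0:ℝ) 1 ⊆ Icc 0 1 := by
    rw [uIoc_of_le zero_le_one]; exact Ioc_subset_Icc_self
  have hmeas : ∀ w ∈ U, AEStronglyMeasurable (K w) (volume.restrict (uIoc (0:ℝ) 1)) := fun w hw =>
    ((hKs w hw).mono hsub).aestronglyMeasurable measurableSet_uIoc
  have hnb : ball w0 (ρ / 2) ∈ 𝓝 w0 := ball_mem_nhds _ (half_pos hρ)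
  have hw0U : ∀ w ∈ ball w0 (ρ / 2), closedBall w (ρ / 2) ⊆ closedBall w0 ρ := fun w hw =>
    closedBall_subset_closedBall' (by have := mem_ball.1 hw; linarith)
  have hdat : ∀ s ∈ Icc (0:ℝ) 1, ∀ w ∈ ball w0 (ρ / 2),
      HasDerivAt (fun w => K w s) (deriv (fun w => K w s) w) w := fun s hs w hw =>
    ((hd s hs).differentiableAt (hU.mem_nhds
      (hρU (hw0U w hw (mem_closedBall_self (half_pos hρ).le))))).hasDerivAt
  refine (intervalIntegral.hasDerivAt_integral_of_dominated_loc_of_deriv_le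
    (F := K) (F' := fun w s => deriv (fun w => K w s) w) (s := ball w0 (ρ / 2))
    (bound := fun _ => M / (ρ / 2)) hnb ?_ ?_ ?_ ?_ ?_ ?_).2.differentiableAt.differentiableWithinAt
  · filter_upwards [hU.mem_nhds hw0] with w hw using hmeas w hw
  · exact ((hKs w0 hw0).intervalIntegrable_of_Icc zero_le_one)
  · have hu : Tendsto (fun n : ℕ => ((1 / ((n:ℝ) + 1) : ℝ) : ℂ)) atTop (𝓝 0) := by
      have := tendsto_one_div_add_atTop_nhds_zero_nat (𝕜 := ℝ)
      exact_mod_cast (Complex.continuous_ofReal.tendsto 0).comp this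
    have hu' : Tendsto (fun n : ℕ => ((1 / ((n:ℝ) + 1) : ℝ) : ℂ)) atTop (𝓝[≠] 0) := by
      refine tendsto_nhdsWithin_of_tendsto_nhds_of_eventually_within _ hu
        (Eventually.of_forall fun n => ?_)
      have : (1 / ((n:ℝ) + 1)) ≠ 0 := by positivity
      exact mem_compl_singleton_iff.2 (Complex.ofReal_ne_zero.2 this)
    have hu2 : ∀ᶠ n : ℕ in atTop, w0 + ((1 / ((n:ℝ) + 1) : ℝ) : ℂ) ∈ U := by
      have : Tendsto (fun n : ℕ => w0 + ((1 / ((n:ℝ) + 1) : ℝ) : ℂ)) atTop (𝓝 (w0 + 0)) :=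
        tendsto_const_nhds.add hu
      rw [add_zero] at this
      exact this.eventually (hU.mem_nhds hw0)
    obtain ⟨N, hN⟩ := eventually_atTop.1 hu2
    refine aestronglyMeasurable_of_tendsto_ae atTop (f := fun (n : ℕ) s =>
      (((1 / (((n + N : ℕ):ℝ) + 1) : ℝ) : ℂ))⁻¹ •
        (K (w0 + ((1 / (((n + N : ℕ):ℝ) + 1) : ℝ) : ℂ)) s - K w0 s)) ?_ ?_
    · intro n
      exact ((hmeas _ (hN (n + N) (by omega))).sub (hmeas w0 hw0)).const_smul
        ((((1 / (((n + N : ℕ):ℝ) + 1) : ℝ) : ℂ))⁻¹)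
    · refine (ae_restrict_iff' measurableSet_uIoc).2 (Eventually.of_forall fun s hs => ?_)
      have := (hdat s (hsub hs) w0 (mem_ball_self (half_pos hρ))).tendsto_slope_zero
      exact (this.comp hu').comp (tendsto_add_atTop_nat N)
  · refine Eventually.of_forall fun s hs w hw => ?_
    refine Complex.norm_deriv_le_of_forall_mem_sphere_norm_le (half_pos hρ) ?_ ?_
    · refine DifferentiableOn.diffContOnCl ((hd s (hsub hs)).mono ?_)
      rw [closure_ball _ (half_pos hρ).ne']
      exact (hw0U w hw).trans hρU
    · intro x hx
      exact hM (x, s) ⟨hw0U w hw (sphere_subset_closedBall hx), hsub hs⟩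
  · exact intervalIntegrable_const
  · exact Eventually.of_forall fun s hs w hw => hdat s (hsub hs) w hw

/-- Integral over the straight segment from `u` to `v`. -/
noncomputable def segInt (h : ℂ → ℂ) (u v : ℂ) : ℂ :=
  ∫ s in (0:ℝ)..1, h (u + s * (v - u)) * (v - u)

lemma segInt_prim {U : Set ℂ} (hU : IsOpen U) (hc : Convex ℝ U) {h : ℂ → ℂ}
    (hh : DifferentiableOn ℂ h U) :
    ∃ P : ℂ → ℂ, ∀ u ∈ U, ∀ v ∈ U, segInt h u v = P v - P u := by
  obtain ⟨P, hP⟩ := hc.exists_forall_hasDerivWithinAt hh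
  refine ⟨P, fun u hu v hv => ?_⟩
  have hmem : ∀ s ∈ Icc (0:ℝ) 1, u + s * (v - u) ∈ U := fun s hs => seg_mem hc hu hv hs
  have hcont : ContinuousOn (fun s : ℝ => h (u + s * (v - u)) * (v - u)) (Icc 0 1) :=
    (hh.continuousOn.comp (seg_continuous u v).continuousOn hmem).mul continuousOn_const
  have := intervalIntegral.integral_eq_sub_of_hasDerivAt (a := (0:ℝ)) (b := 1)
    (f := fun s : ℝ => P (u + s * (v - u))) (f' := fun s : ℝ => h (u + s * (v - u)) * (v - u))
    (fun s hs => by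
      rw [uIcc_of_le zero_le_one] at hs
      have h1 := (hP _ (hmem s hs)).hasDerivAt (hU.mem_nhds (hmem s hs))
      have h2 : HasDerivAt (fun s : ℝ => u + (s:ℂ) * (v - u)) (v - u) s := by
        have := ((Complex.ofRealCLM.hasDerivAt (x := s)).mul_const (v - u)).const_add u
        simpa using this
      exact h1.comp s h2)
    (hcont.intervalIntegrable_of_Icc zero_le_one)
  simpa [segInt] using this

lemma segInt_congr {U : Set ℂ} (hc : Convex ℝ U) {h k : ℂ → ℂ} (hk : EqOn h k U) {u v : ℂ}
    (hu : u ∈ U) (hv : v ∈ U) : segInt h u v = segInt k u v := by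
  refine intervalIntegral.integral_congr fun s hs => ?_
  rw [uIcc_of_le zero_le_one] at hs
  simp only [hk (seg_mem hc hu hv hs)]

lemma segInt_shift (h : ℂ → ℂ) (u v p : ℂ) :
    segInt h (u + p) (v + p) = segInt (fun x => h (x + p)) u v := by
  refine intervalIntegral.integral_congr fun s hs => ?_
  simp only [add_sub_add_right_eq_sub]
  rw [show u + p + (s:ℂ) * (v - u) = u + s * (v - u) + p by ring]

end HadamardCont


namespace HadamardCont
open Set Metric Topology MeasureTheory

/-- A family of germs, each holomorphic on a ball of radius `d z`, closed under re-expansion. -/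
structure IsAtlas (d : ℂ → ℝ) (G : ℂ → (ℂ → ℂ) → Prop) : Prop where
  lip : ∀ z z', d z - dist z' z ≤ d z'
  diff : ∀ {z φ}, G z φ → DifferentiableOn ℂ φ (ball z (d z))
  pos : ∀ {z φ}, G z φ → 0 < d z
  ext : ∀ {z φ z'}, G z φ → z' ∈ ball z (d z) → ∃ φ', G z' φ' ∧ φ' =ᶠ[𝓝 z'] φ

lemma IsAtlas.spread {d : ℂ → ℝ} {G : ℂ → (ℂ → ℂ) → Prop} (h : IsAtlas d G) {z z' w x : ℂ}
    {φ φ' : ℂ → ℂ} (hz : G z φ) (hz' : G z' φ') (hw : w ∈ ball z (d z)) (hw' : w ∈ ball z' (d z'))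
    (e : φ' =ᶠ[𝓝 w] φ) (hx : x ∈ ball z (d z)) (hx' : x ∈ ball z' (d z')) : φ' =ᶠ[𝓝 x] φ :=
  germ_spread (isOpen_ball.inter isOpen_ball) ((convex_ball z (d z)).inter (convex_ball z' (d z')))
    ((h.diff hz').mono inter_subset_right) ((h.diff hz).mono inter_subset_left) ⟨hw, hw'⟩ e
    ⟨hx, hx'⟩

structure Setup where
  dS : ℂ → ℝ
  dT : ℂ → ℝ
  GS : ℂ → (ℂ → ℂ) → Prop
  GT : ℂ → (ℂ → ℂ) → Prop
  hS : IsAtlas dS GS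
  hT : IsAtlas dT GT
  p : ℂ
  per : ∀ x, dT (x - p) = dT x

structure Vtx where
  z : ℂ
  φ : ℂ → ℂ
  ψ : ℂ → ℂ

def Vtx.integrand (v : Vtx) (Y x : ℂ) : ℂ := v.φ x * v.ψ (Y - x)

namespace Setup
variable (X : Setup)

def VGood (y : ℂ) (v : Vtx) : Prop := X.GS v.z v.φ ∧ X.GT (y - v.z) v.ψ

structure Edge (y : ℂ) (v v' : Vtx) : Prop where
  lS : dist v'.z v.z < X.dS v.z
  lT : dist v'.z v.z < X.dT (y - v.z)
  eS : v'.φ =ᶠ[𝓝 v'.z] v.φ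
  eT : v'.ψ =ᶠ[𝓝 (y - v'.z)] v.ψ

inductive Chn (y : ℂ) (ε : ℝ) (v : Vtx) : Vtx → (ℂ → ℂ) → Prop
  | nil (h : X.VGood y v) : Chn y ε v v (fun _ => 0)
  | snoc (v' v'' : Vtx) (I : ℂ → ℂ) (h : Chn y ε v v' I) (h' : X.VGood y v'')
      (e : X.Edge y v' v'') (l : dist v''.z v'.z < ε) :
      Chn y ε v v'' (fun Y => I Y + segInt (v'.integrand Y) v'.z v''.z)

variable {X}

lemma Chn.good_right {y : ℂ} {ε : ℝ} {v v' : Vtx} {I : ℂ → ℂ} (h : X.Chn y ε v v' I) :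
    X.VGood y v' := by
  cases h <;> assumption

lemma Chn.good_left {y : ℂ} {ε : ℝ} {v v' : Vtx} {I : ℂ → ℂ} (h : X.Chn y ε v v' I) :
    X.VGood y v := by
  induction h with
  | nil h => exact h
  | snoc v' v'' I h h' e l ih => exact ih

variable (X)

/-- The convex open set where `v.integrand Y` is holomorphic. -/
def dom (y : ℂ) (v : Vtx) (Y : ℂ) : Set ℂ :=
  ball v.z (X.dS v.z) ∩ ball (v.z + (Y - y)) (X.dT (y - v.z))

variable {X}

lemma mem_dom {y : ℂ} {v : Vtx} {Y x : ℂ} :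
    x ∈ X.dom y v Y ↔ x ∈ ball v.z (X.dS v.z) ∧ Y - x ∈ ball (y - v.z) (X.dT (y - v.z)) := by
  have : dist x (v.z + (Y - y)) = dist (Y - x) (y - v.z) := by
    rw [dist_eq_norm, dist_eq_norm, ← norm_neg]
    congr 1; ring
  simp only [dom, mem_inter_iff, mem_ball, this]

lemma isOpen_dom {y : ℂ} {v : Vtx} {Y : ℂ} : IsOpen (X.dom y v Y) := isOpen_ball.inter isOpen_ball

lemma convex_dom {y : ℂ} {v : Vtx} {Y : ℂ} : Convex ℝ (X.dom y v Y) :=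
  (convex_ball _ _).inter (convex_ball _ _)

lemma dom_eventually {y : ℂ} {v : Vtx} {Y0 : ℂ} {x : ℂ → ℂ} (hx : ContinuousAt x Y0)
    (h : x Y0 ∈ X.dom y v Y0) : ∀ᶠ Y in 𝓝 Y0, x Y ∈ X.dom y v Y := by
  rw [mem_dom] at h
  have h1 := hx.eventually (isOpen_ball.mem_nhds h.1)
  have h2 := (continuousAt_id.sub hx).eventually (isOpen_ball.mem_nhds h.2)
  filter_upwards [h1, h2] with Y a b
  exact mem_dom.2 ⟨a, b⟩

lemma dom_diff {y : ℂ} {v : Vtx} {Y : ℂ} (hv : X.VGood y v) :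
    DifferentiableOn ℂ (v.integrand Y) (X.dom y v Y) := by
  refine DifferentiableOn.mul ((X.hS.diff hv.1).mono inter_subset_left) ?_
  refine (X.hT.diff hv.2).comp (by fun_prop) ?_
  intro x hx
  exact (mem_dom.1 hx).2

/-- Integrands of two compatible vertices agree on the common domain. -/
lemma integrand_eqOn {y y' : ℂ} {v v' : Vtx} {Y : ℂ} (hv : X.VGood y v) (hv' : X.VGood y' v')
    {a b : ℂ} (ha : a ∈ ball v.z (X.dS v.z)) (ha' : a ∈ ball v'.z (X.dS v'.z))
    (ea : v'.φ =ᶠ[𝓝 a] v.φ)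
    (hb : b ∈ ball (y - v.z) (X.dT (y - v.z))) (hb' : b ∈ ball (y' - v'.z) (X.dT (y' - v'.z)))
    (eb : v'.ψ =ᶠ[𝓝 b] v.ψ) :
    EqOn (v'.integrand Y) (v.integrand Y) (X.dom y v Y ∩ X.dom y' v' Y) := by
  rintro x ⟨hx, hx'⟩
  rw [mem_dom] at hx hx'
  have h1 := (X.hS.spread hv.1 hv'.1 ha ha' ea hx.1 hx'.1).eq_of_nhds
  have h2 := (X.hT.spread hv.2 hv'.2 hb hb' eb hx.2 hx'.2).eq_of_nhds
  simp only [Vtx.integrand, h1, h2]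

lemma self_dom {y : ℂ} {v : Vtx} (hv : X.VGood y v) : v.z ∈ X.dom y v y :=
  mem_dom.2 ⟨mem_ball_self (X.hS.pos hv.1), mem_ball_self (X.hT.pos hv.2)⟩

lemma dist_sub_sub (y a b : ℂ) : dist (y - a) (y - b) = dist a b := by
  rw [dist_eq_norm, dist_eq_norm, ← norm_neg]; congr 1; ring

lemma Edge.dom {y : ℂ} {v v' : Vtx} (e : X.Edge y v v') : v'.z ∈ X.dom y v y :=
  mem_dom.2 ⟨e.lS, by rw [mem_ball, dist_sub_sub]; exact e.lT⟩

lemma Chn.halve {y : ℂ} {ε : ℝ} {v v' : Vtx} {I : ℂ → ℂ} (h : X.Chn y ε v v' I) :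
    ∃ I', X.Chn y (ε / 2) v v' I' ∧ I' =ᶠ[𝓝 y] I := by
  induction h with
  | nil h => exact ⟨_, Chn.nil h, EventuallyEq.rfl⟩
  | snoc v' v'' I h h' e l ih =>
    obtain ⟨I', hI', eI⟩ := ih
    have hv' := h.good_right
    set m : ℂ := (v'.z + v''.z) / 2 with hm
    have d1 : dist m v'.z = dist v''.z v'.z / 2 := by
      rw [dist_eq_norm, dist_eq_norm, hm,
        show (v'.z + v''.z) / 2 - v'.z = (v''.z - v'.z) / 2 by ring]
      simp
    have d2 : dist v''.z m = dist v''.z v'.z / 2 := by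
      rw [dist_eq_norm, dist_eq_norm, hm,
        show v''.z - (v'.z + v''.z) / 2 = (v''.z - v'.z) / 2 by ring]
      simp
    have dn : 0 ≤ dist v''.z v'.z := dist_nonneg
    have mS : m ∈ ball v'.z (X.dS v'.z) := by
      rw [mem_ball]; have := e.lS; linarith
    have mT : y - m ∈ ball (y - v'.z) (X.dT (y - v'.z)) := by
      rw [mem_ball, dist_sub_sub]; have := e.lT; linarith
    obtain ⟨φ, hφ, eφ⟩ := X.hS.ext hv'.1 mS
    obtain ⟨ψ, hψ, eψ⟩ := X.hT.ext hv'.2 mT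
    set u : Vtx := ⟨m, φ, ψ⟩
    have hu : X.VGood y u := ⟨hφ, hψ⟩
    have LS := X.hS.lip v'.z m
    have LT := X.hT.lip (y - v'.z) (y - m)
    rw [dist_sub_sub] at LT
    have lS := e.lS
    have lT := e.lT
    have bS : v''.z ∈ ball m (X.dS m) := by rw [mem_ball]; linarith
    have bT : y - v''.z ∈ ball (y - m) (X.dT (y - m)) := by
      rw [mem_ball, dist_sub_sub]; linarith
    have E1 : X.Edge y v' u := ⟨mS, by rw [mem_ball, dist_sub_sub] at mT; exact mT, eφ, eψ⟩
    have E2 : X.Edge y u v'' := by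
      refine ⟨bS, by rw [mem_ball, dist_sub_sub] at bT; exact bT, ?_, ?_⟩
      · exact e.eS.trans (X.hS.spread hv'.1 hu.1 mS (mem_ball_self (X.hS.pos hφ)) eφ
          (mem_dom.1 e.dom).1 bS).symm
      · exact e.eT.trans (X.hT.spread hv'.2 hu.2 mT (mem_ball_self (X.hT.pos hψ)) eψ
          (mem_dom.1 e.dom).2 bT).symm
    refine ⟨_, Chn.snoc _ _ _ (Chn.snoc _ _ _ hI' hu E1 (by change dist m v'.z < _; linarith))
      h' E2 (by change dist v''.z m < _; linarith), ?_⟩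
    have c0 := dom_eventually (x := fun _ => v'.z) continuousAt_const (self_dom hv')
    have c1 := dom_eventually (x := fun _ => m) continuousAt_const E1.dom
    have c2 := dom_eventually (x := fun _ => v''.z) continuousAt_const e.dom
    have c3 := dom_eventually (x := fun _ => m) continuousAt_const (self_dom hu)
    have c4 := dom_eventually (x := fun _ => v''.z) continuousAt_const E2.dom
    filter_upwards [eI, c0, c1, c2, c3, c4] with Y a0 a1 a2 a3 a4 a5
    obtain ⟨P, hP⟩ := segInt_prim isOpen_dom convex_dom (dom_diff (Y := Y) hv')
    have q := segInt_congr (convex_dom.inter convex_dom)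
      (integrand_eqOn (Y := Y) hv' hu mS (mem_ball_self (X.hS.pos hφ)) eφ mT
        (mem_ball_self (X.hT.pos hψ)) eψ) ⟨a2, a4⟩ ⟨a3, a5⟩
    change I' Y + segInt (v'.integrand Y) v'.z m + segInt (u.integrand Y) m v''.z = _
    rw [q, a0, hP _ a1 _ a2, hP _ a2 _ a3, hP _ a1 _ a3]
    ring

lemma Chn.refine {y : ℂ} {ε : ℝ} {v v' : Vtx} {I : ℂ → ℂ} (h : X.Chn y ε v v' I) {ε' : ℝ}
    (hε' : 0 < ε') : ∃ I', X.Chn y ε' v v' I' ∧ I' =ᶠ[𝓝 y] I := by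
  have key : ∀ n : ℕ, ∃ I', X.Chn y (ε / 2 ^ n) v v' I' ∧ I' =ᶠ[𝓝 y] I := by
    intro n
    induction n with
    | zero => exact ⟨I, by simpa using h, EventuallyEq.rfl⟩
    | succ n ih =>
      obtain ⟨I', h1, h2⟩ := ih
      obtain ⟨I'', h3, h4⟩ := h1.halve
      refine ⟨I'', ?_, h4.trans h2⟩
      rwa [pow_succ, ← div_div]
  have : Tendsto (fun n : ℕ => ε / 2 ^ n) atTop (𝓝 0) := by
    have := (tendsto_pow_atTop_nhds_zero_of_lt_one (r := (1/2:ℝ)) (by norm_num)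
      (by norm_num)).const_mul ε
    simpa [div_eq_mul_inv] using this
  obtain ⟨n, hn⟩ := (this.eventually (gt_mem_nhds hε')).exists
  obtain ⟨I', h1, h2⟩ := key n
  refine ⟨I', ?_, h2⟩
  clear h2 key h
  induction h1 with
  | nil h => exact Chn.nil h
  | snoc v' v'' I h h' e l ih => exact Chn.snoc _ _ _ ih h' e (l.trans hn)

end Setup
end HadamardCont


namespace HadamardCont
open Set Metric Topology MeasureTheory

lemma IsAtlas.transport {d : ℂ → ℝ} {G : ℂ → (ℂ → ℂ) → Prop} (h : IsAtlas d G)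
    {u0 u1 u0' u1' : ℂ} {φ0 φ1 φ0' φ1' : ℂ → ℂ} (g0 : G u0 φ0) (g1 : G u1 φ1) (g0' : G u0' φ0')
    (a : u1 ∈ ball u0 (d u0)) (b : u0' ∈ ball u0 (d u0)) (c : u1' ∈ ball u1 (d u1))
    (a' : u1' ∈ ball u0 (d u0)) (b' : u1' ∈ ball u0' (d u0'))
    (e : φ1 =ᶠ[𝓝 u1] φ0) (e0 : φ0' =ᶠ[𝓝 u0'] φ0) (e1 : φ1' =ᶠ[𝓝 u1'] φ1) :
    φ1' =ᶠ[𝓝 u1'] φ0' :=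
  (e1.trans (h.spread g0 g1 a (mem_ball_self (h.pos g1)) e a' c)).trans
    (h.spread g0 g0' b (mem_ball_self (h.pos g0')) e0 a' b').symm

namespace Setup
variable (X : Setup)

open Classical in
/-- `1` if the vertex has to follow the singularities of the second factor, `0` otherwise. -/
noncomputable def chi (y : ℂ) (δ : ℝ) (v : Vtx) : ℂ := if X.dT (y - v.z) < δ / 2 then 1 else 0

noncomputable def pos (y : ℂ) (δ : ℝ) (v : Vtx) (w : ℂ) : ℂ := v.z + X.chi y δ v * w

structure Moved (y : ℂ) (δ : ℝ) (w : ℂ) (v v1 : Vtx) : Prop where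
  z : v1.z = X.pos y δ v w
  good : X.VGood (y + w) v1
  eS : v1.φ =ᶠ[𝓝 v1.z] v.φ
  eT : v1.ψ =ᶠ[𝓝 (y + w - v1.z)] v.ψ

variable {X}

lemma chi_cases {y : ℂ} {δ : ℝ} (hδ : ∀ x, δ ≤ X.dS x + X.dT (y - x)) (v : Vtx) :
    (X.dT (y - v.z) < δ / 2 ∧ δ / 2 < X.dS v.z ∧ ∀ w, X.pos y δ v w = v.z + w) ∨
    (δ / 2 ≤ X.dT (y - v.z) ∧ ∀ w, X.pos y δ v w = v.z) := by
  by_cases h : X.dT (y - v.z) < δ / 2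
  · left
    refine ⟨h, by linarith [hδ v.z], fun w => ?_⟩
    simp [pos, chi, h]
  · right
    refine ⟨not_lt.1 h, fun w => ?_⟩
    simp [pos, chi, h]

lemma pos_dom {y : ℂ} {δ : ℝ} (hδ : ∀ x, δ ≤ X.dS x + X.dT (y - x)) {v : Vtx}
    (hv : X.VGood y v) {w : ℂ} (hw : ‖w‖ < δ / 16) : X.pos y δ v w ∈ X.dom y v (y + w) := by
  have p1 := X.hS.pos hv.1
  have p2 := X.hT.pos hv.2
  have n := norm_nonneg w
  rw [mem_dom, mem_ball, mem_ball, dist_eq_norm, dist_eq_norm]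
  rcases chi_cases hδ v with ⟨a, b, c⟩ | ⟨a, c⟩
  · rw [c, show v.z + w - v.z = w by ring, show y + w - (v.z + w) - (y - v.z) = 0 by ring, norm_zero]
    exact ⟨by linarith, p2⟩
  · rw [c, show v.z - v.z = 0 by ring, show y + w - v.z - (y - v.z) = w by ring, norm_zero]
    exact ⟨p1, by linarith⟩

lemma edge_pos_dom {y : ℂ} {δ : ℝ} (hδ : ∀ x, δ ≤ X.dS x + X.dT (y - x)) {v v' : Vtx}
    (e : X.Edge y v v') (l : dist v'.z v.z < δ / 16) {w : ℂ} (hw : ‖w‖ < δ / 16) :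
    X.pos y δ v' w ∈ X.dom y v (y + w) := by
  have n := norm_nonneg w
  have lS := e.lS
  have lT := e.lT
  have LS := X.hS.lip v'.z v.z
  have LT := X.hT.lip (y - v'.z) (y - v.z)
  rw [dist_sub_sub] at LT
  rw [dist_comm v.z] at LS LT
  rw [mem_dom, mem_ball, mem_ball]
  rw [dist_eq_norm] at *
  rw [dist_eq_norm]
  have m := norm_nonneg (v'.z - v.z)
  have t1 := norm_add_le (v'.z - v.z) w
  have t2 := norm_sub_le w (v'.z - v.z)
  have hx := hδ v.z
  rcases chi_cases hδ v' with ⟨a', b', c'⟩ | ⟨a', c'⟩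
  · rw [c', show v'.z + w - v.z = v'.z - v.z + w by ring,
      show y + w - (v'.z + w) - (y - v.z) = -(v'.z - v.z) by ring, norm_neg]
    exact ⟨by linarith, by linarith⟩
  · rw [c', show y + w - v'.z - (y - v.z) = w - (v'.z - v.z) by ring]
    exact ⟨by linarith, by linarith⟩

lemma exists_moved {y : ℂ} {δ : ℝ} (hδ : ∀ x, δ ≤ X.dS x + X.dT (y - x)) {v : Vtx}
    (hv : X.VGood y v) {w : ℂ} (hw : ‖w‖ < δ / 16) : ∃ v1, X.Moved y δ w v v1 := by
  have := mem_dom.1 (pos_dom hδ hv hw)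
  obtain ⟨φ, h1, h2⟩ := X.hS.ext hv.1 this.1
  obtain ⟨ψ, h3, h4⟩ := X.hT.ext hv.2 this.2
  exact ⟨⟨X.pos y δ v w, φ, ψ⟩, rfl, ⟨h1, h3⟩, h2, h4⟩

lemma moved_edge {y : ℂ} {δ : ℝ} (hδ : ∀ x, δ ≤ X.dS x + X.dT (y - x)) {v v' v1 v1' : Vtx}
    (hv : X.VGood y v) (hv' : X.VGood y v')
    (e : X.Edge y v v') (l : dist v'.z v.z < δ / 16) {w : ℂ} (hw : ‖w‖ < δ / 16)
    (m : X.Moved y δ w v v1) (m' : X.Moved y δ w v' v1') :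
    X.Edge (y + w) v1 v1' ∧ dist v1'.z v1.z < δ := by
  have key : dist v1'.z v1.z < X.dS v1.z ∧ dist v1'.z v1.z < X.dT (y + w - v1.z) ∧
      dist v1'.z v1.z < δ := by
    have n := norm_nonneg w
    have lS := e.lS
    have lT := e.lT
    have LS := X.hS.lip v'.z v.z
    have LT := X.hT.lip (y - v'.z) (y - v.z)
    rw [dist_sub_sub] at LT
    rw [dist_comm v.z] at LS LT
    have LS1 := X.hS.lip v.z (v.z + w)
    have LT1 := X.hT.lip (y - v.z) (y + w - v.z)
    rw [dist_eq_norm] at *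
    rw [show v.z + w - v.z = w by ring] at LS1
    rw [show y + w - v.z - (y - v.z) = w by ring] at LT1
    have mm := norm_nonneg (v'.z - v.z)
    have t1 := norm_add_le (v'.z - v.z) w
    have t2 := norm_sub_le (v'.z - v.z) w
    have hx := hδ v.z
    have hx' := hδ v'.z
    rw [m.z, m'.z]
    rcases chi_cases hδ v with ⟨a, b, c⟩ | ⟨a, c⟩ <;>
    rcases chi_cases hδ v' with ⟨a', b', c'⟩ | ⟨a', c'⟩ <;> rw [c, c']
    · rw [show v'.z + w - (v.z + w) = v'.z - v.z by ring, show y + w - (v.z + w) = y - v.z by ring]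
      exact ⟨by linarith, by linarith, by linarith⟩
    · rw [show v'.z - (v.z + w) = v'.z - v.z - w by ring, show y + w - (v.z + w) = y - v.z by ring]
      exact ⟨by linarith, by linarith, by linarith⟩
    · rw [show v'.z + w - v.z = v'.z - v.z + w by ring]
      exact ⟨by linarith, by linarith, by linarith⟩
    · exact ⟨by linarith, by linarith, by linarith⟩
  have q1 := mem_dom.1 (pos_dom hδ hv hw)
  have q2 := mem_dom.1 (pos_dom hδ hv' hw)
  have q3 := mem_dom.1 (edge_pos_dom hδ e l hw)
  have q4 := mem_dom.1 e.dom
  rw [← m.z] at q1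
  rw [← m'.z] at q2 q3
  refine ⟨⟨key.1, key.2.1, ?_, ?_⟩, key.2.2⟩
  · exact X.hS.transport hv.1 hv'.1 m.good.1 q4.1 q1.1 q2.1 q3.1 key.1 e.eS m.eS m'.eS
  · exact X.hT.transport hv.2 hv'.2 m.good.2 q4.2 q1.2 q2.2 q3.2
      (by rw [mem_ball, dist_sub_sub]; exact key.2.1) e.eT m.eT m'.eT

lemma pos_continuous {y : ℂ} {δ : ℝ} {v : Vtx} : Continuous (fun Y => X.pos y δ v (Y - y)) := by
  unfold pos; fun_prop

lemma norm_sub_of_mem {y Y : ℂ} {r : ℝ} (h : Y ∈ ball y r) : ‖Y - y‖ < r := by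
  rwa [mem_ball, dist_eq_norm] at h

lemma edge_diff {y : ℂ} {δ : ℝ} (hδ : ∀ x, δ ≤ X.dS x + X.dT (y - x)) {v v' : Vtx}
    (hv : X.VGood y v) (e : X.Edge y v v') (l : dist v'.z v.z < δ / 16) :
    DifferentiableOn ℂ (fun Y => segInt (v.integrand Y) (X.pos y δ v (Y - y))
      (X.pos y δ v' (Y - y))) (ball y (δ / 16)) := by
  have hmem : ∀ Y ∈ ball y (δ / 16), ∀ s ∈ Icc (0:ℝ) 1, X.pos y δ v (Y - y) +
      s * (X.pos y δ v' (Y - y) - X.pos y δ v (Y - y)) ∈ X.dom y v Y := by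
    intro Y hY s hs
    have h1 := pos_dom hδ hv (norm_sub_of_mem hY)
    have h2 := edge_pos_dom hδ e l (norm_sub_of_mem hY)
    rw [add_sub_cancel] at h1 h2
    exact seg_mem convex_dom h1 h2 hs
  refine param_diff (K := fun Y s => v.integrand Y (X.pos y δ v (Y - y) +
      s * (X.pos y δ v' (Y - y) - X.pos y δ v (Y - y))) *
      (X.pos y δ v' (Y - y) - X.pos y δ v (Y - y))) isOpen_ball ?_ ?_
  · have c1 := pos_continuous (X := X) (y := y) (δ := δ) (v := v)
    have c2 := pos_continuous (X := X) (y := y) (δ := δ) (v := v')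
    have c1' : Continuous (fun q : ℂ × ℝ => X.pos y δ v (q.1 - y)) := c1.comp continuous_fst
    have c2' : Continuous (fun q : ℂ × ℝ => X.pos y δ v' (q.1 - y)) := c2.comp continuous_fst
    unfold Vtx.integrand
    refine ContinuousOn.mul (ContinuousOn.mul ?_ ?_) (by fun_prop)
    · exact (X.hS.diff hv.1).continuousOn.comp (by fun_prop)
        (fun q hq => (mem_dom.1 (hmem q.1 hq.1 q.2 hq.2)).1)
    · exact (X.hT.diff hv.2).continuousOn.comp (by fun_prop)
        (fun q hq => (mem_dom.1 (hmem q.1 hq.1 q.2 hq.2)).2)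
  · intro s hs
    have d1 : ∀ v : Vtx, Differentiable ℂ (fun Y => X.pos y δ v (Y - y)) := by
      intro v; unfold pos; fun_prop
    have d2 := d1 v
    have d3 := d1 v'
    unfold Vtx.integrand
    refine DifferentiableOn.mul (DifferentiableOn.mul ?_ ?_) (by fun_prop)
    · exact (X.hS.diff hv.1).comp (by fun_prop) (fun Y hY => (mem_dom.1 (hmem Y hY s hs)).1)
    · exact (X.hT.diff hv.2).comp (by fun_prop) (fun Y hY => (mem_dom.1 (hmem Y hY s hs)).2)

lemma edge_identity {y : ℂ} {δ : ℝ} (hδ : ∀ x, δ ≤ X.dS x + X.dT (y - x)) {v v' : Vtx}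
    (hv : X.VGood y v) (hv' : X.VGood y v') (e : X.Edge y v v') (l : dist v'.z v.z < δ / 16)
    {w : ℂ} (hw : ‖w‖ < δ / 16) :
    ∀ᶠ Y in 𝓝 (y + w),
      segInt (v.integrand Y) (X.pos y δ v (Y - y)) (X.pos y δ v' (Y - y)) +
        segInt (v.integrand Y) (X.pos y δ v w) (X.pos y δ v (Y - y)) =
      segInt (v.integrand Y) (X.pos y δ v w) (X.pos y δ v' w) +
        segInt (v'.integrand Y) (X.pos y δ v' w) (X.pos y δ v' (Y - y)) := by
  have ee : y + w - y = w := by ring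
  have h1 := pos_dom hδ hv hw
  have h2 := pos_dom hδ hv' hw
  have h3 := edge_pos_dom hδ e l hw
  have c1 := dom_eventually (x := fun _ => X.pos y δ v w) continuousAt_const h1
  have c2 := dom_eventually (x := fun Y => X.pos y δ v (Y - y)) (pos_continuous.continuousAt)
    (Y0 := y + w) (y := y) (v := v) (by simpa only [ee] using h1)
  have c3 := dom_eventually (x := fun _ => X.pos y δ v' w) continuousAt_const h2
  have c4 := dom_eventually (x := fun Y => X.pos y δ v' (Y - y)) (pos_continuous.continuousAt)
    (Y0 := y + w) (y := y) (v := v') (by simpa only [ee] using h2)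
  have c5 := dom_eventually (x := fun _ => X.pos y δ v' w) continuousAt_const h3
  have c6 := dom_eventually (x := fun Y => X.pos y δ v' (Y - y)) (pos_continuous.continuousAt)
    (Y0 := y + w) (y := y) (v := v) (by simpa only [ee] using h3)
  have q4 := mem_dom.1 e.dom
  filter_upwards [c1, c2, c3, c4, c5, c6] with Y a1 a2 a3 a4 a5 a6
  obtain ⟨P, hP⟩ := segInt_prim isOpen_dom convex_dom (dom_diff (Y := Y) hv)
  have q := segInt_congr (convex_dom.inter convex_dom)
    (integrand_eqOn (Y := Y) hv hv' q4.1 (mem_ball_self (X.hS.pos hv'.1)) e.eS q4.2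
      (mem_ball_self (X.hT.pos hv'.2)) e.eT) ⟨a5, a3⟩ ⟨a6, a4⟩
  rw [q, hP _ a2 _ a6, hP _ a1 _ a2, hP _ a1 _ a5, hP _ a5 _ a6]
  ring

lemma moved_integral {y : ℂ} {δ : ℝ} (hδ : ∀ x, δ ≤ X.dS x + X.dT (y - x)) {v v' v1 v1' : Vtx}
    (hv : X.VGood y v) (hv' : X.VGood y v')
    (e : X.Edge y v v') (l : dist v'.z v.z < δ / 16) {w : ℂ} (hw : ‖w‖ < δ / 16)
    (m : X.Moved y δ w v v1) (m' : X.Moved y δ w v' v1') :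
    ∀ᶠ Y in 𝓝 (y + w), segInt (v1.integrand Y) v1.z v1'.z =
      segInt (v.integrand Y) (X.pos y δ v w) (X.pos y δ v' w) := by
  have E := (moved_edge hδ hv hv' e l hw m m').1
  have h1 := pos_dom hδ hv hw
  have h3 := edge_pos_dom hδ e l hw
  rw [← m.z] at *
  rw [← m'.z] at *
  have c1 := dom_eventually (x := fun _ => v1.z) continuousAt_const h1
  have c2 := dom_eventually (x := fun _ => v1'.z) continuousAt_const h3
  have c3 := dom_eventually (x := fun _ => v1.z) continuousAt_const (self_dom m.good)
  have c4 := dom_eventually (x := fun _ => v1'.z) continuousAt_const E.dom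
  filter_upwards [c1, c2, c3, c4] with Y a1 a2 a3 a4
  have q := mem_dom.1 h1
  exact segInt_congr (convex_dom.inter convex_dom)
    (integrand_eqOn (Y := Y) hv m.good q.1 (mem_ball_self (X.hS.pos m.good.1)) m.eS q.2
      (mem_ball_self (X.hT.pos m.good.2)) m.eT) ⟨a1, a3⟩ ⟨a2, a4⟩

end Setup
end HadamardCont


namespace HadamardCont
open Set Metric Topology MeasureTheory
namespace Setup
variable {X : Setup}

lemma Chn.move {y : ℂ} {δ : ℝ} (hδ : ∀ x, δ ≤ X.dS x + X.dT (y - x))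
    {v v' : Vtx} {I : ℂ → ℂ} (h : X.Chn y (δ / 16) v v' I) (hδ0 : 0 < δ) :
    ∃ J : ℂ → ℂ, DifferentiableOn ℂ J (ball y (δ / 16)) ∧
      (∀ᶠ Y in 𝓝 y, J Y + segInt (v.integrand Y) (X.pos y δ v 0) (X.pos y δ v (Y - y)) =
        I Y + segInt (v'.integrand Y) (X.pos y δ v' 0) (X.pos y δ v' (Y - y))) ∧
      ∀ w, ‖w‖ < δ / 16 → ∀ v1, X.Moved y δ w v v1 →
        ∃ v1' I', X.Moved y δ w v' v1' ∧ X.Chn (y + w) δ v1 v1' I' ∧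
          ∀ᶠ Y in 𝓝 (y + w),
          J Y + segInt (v.integrand Y) (X.pos y δ v w) (X.pos y δ v (Y - y)) =
          I' Y + segInt (v'.integrand Y) (X.pos y δ v' w) (X.pos y δ v' (Y - y)) := by
  induction h with
  | nil h =>
    refine ⟨fun _ => 0, by fun_prop, by simp, ?_⟩
    intro w hw v1 m
    exact ⟨v1, fun _ => 0, m, Chn.nil m.good, by simp⟩
  | snoc v' v'' I h h' e l ih =>
    obtain ⟨J, hJ, hJ0, hJw⟩ := ih
    have hv' := h.good_right
    refine ⟨fun Y => J Y + segInt (v'.integrand Y) (X.pos y δ v' (Y - y))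
      (X.pos y δ v'' (Y - y)), hJ.add (edge_diff hδ hv' e l), ?_, ?_⟩
    · have := edge_identity hδ hv' h' e l (w := 0) (by simp; linarith)
      rw [add_zero] at this
      filter_upwards [hJ0, this] with Y a b
      have p0 : ∀ u, X.pos y δ u 0 = u.z := by intro u; simp [pos]
      simp only [p0] at *
      linear_combination a + b
    · intro w hw v1 m
      obtain ⟨v1', I', m', c, ev⟩ := hJw w hw v1 m
      obtain ⟨v1'', m''⟩ := exists_moved hδ h' hw
      obtain ⟨E, L⟩ := moved_edge hδ hv' h' e l hw m' m''
      refine ⟨v1'', _, m'', Chn.snoc v1' v1'' I' c m''.good E L, ?_⟩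
      filter_upwards [ev, edge_identity hδ hv' h' e l hw, moved_integral hδ hv' h' e l hw m' m'']
        with Y a b c
      rw [c]
      linear_combination a + b

/-- The two ends of the contour match modulo the period. -/
structure Closes (X : Setup) (y : ℂ) (v v' : Vtx) : Prop where
  z : v'.z = v.z + X.p
  eS : (fun x => v'.φ (x + X.p)) =ᶠ[𝓝 v.z] v.φ
  eT : (fun x => v'.ψ (x - X.p)) =ᶠ[𝓝 (y - v.z)] v.ψ

def State (X : Setup) (y : ℂ) (I : ℂ → ℂ) : Prop :=
  ∃ ε v v' J, X.Chn y ε v v' J ∧ J =ᶠ[𝓝 y] I ∧ X.Closes y v v'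

lemma Closes.pos {y : ℂ} {v v' : Vtx} (h : X.Closes y v v') (δ : ℝ) (w : ℂ) :
    X.pos y δ v' w = X.pos y δ v w + X.p := by
  have : X.chi y δ v' = X.chi y δ v := by
    unfold chi
    rw [h.z, show y - (v.z + X.p) = y - v.z - X.p by ring, X.per]
  unfold Setup.pos
  rw [this, h.z]; ring

lemma Closes.spreadS {y : ℂ} {v v' : Vtx} (h : X.Closes y v v') (hv : X.VGood y v)
    (hv' : X.VGood y v') {x : ℂ} (hx : x ∈ ball v.z (X.dS v.z))
    (hx' : x + X.p ∈ ball v'.z (X.dS v'.z)) : (fun x => v'.φ (x + X.p)) =ᶠ[𝓝 x] v.φ := by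
  have aux : ∀ t, t ∈ ball v.z (X.dS v'.z) ↔ t + X.p ∈ ball v'.z (X.dS v'.z) := by
    intro t; rw [mem_ball, mem_ball, h.z, dist_add_right]
  refine germ_spread (isOpen_ball.inter isOpen_ball)
    ((convex_ball v.z (X.dS v.z)).inter (convex_ball v.z (X.dS v'.z))) ?_
    ((X.hS.diff hv.1).mono inter_subset_left)
    ⟨mem_ball_self (X.hS.pos hv.1), mem_ball_self (X.hS.pos hv'.1)⟩ h.eS ⟨hx, (aux x).2 hx'⟩
  exact (X.hS.diff hv'.1).comp (by fun_prop) (fun t ht => (aux t).1 ht.2)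

lemma Closes.spreadT {y : ℂ} {v v' : Vtx} (h : X.Closes y v v') (hv : X.VGood y v)
    (hv' : X.VGood y v') {x : ℂ} (hx : x ∈ ball (y - v.z) (X.dT (y - v.z)))
    (hx' : x - X.p ∈ ball (y - v'.z) (X.dT (y - v'.z))) :
    (fun x => v'.ψ (x - X.p)) =ᶠ[𝓝 x] v.ψ := by
  have aux : ∀ t, t ∈ ball (y - v.z) (X.dT (y - v'.z)) ↔
      t - X.p ∈ ball (y - v'.z) (X.dT (y - v'.z)) := by
    intro t
    rw [mem_ball, mem_ball, h.z, show y - (v.z + X.p) = y - v.z - X.p by ring, dist_sub_right]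
  refine germ_spread (isOpen_ball.inter isOpen_ball)
    ((convex_ball (y - v.z) (X.dT (y - v.z))).inter (convex_ball (y - v.z) (X.dT (y - v'.z)))) ?_
    ((X.hT.diff hv.2).mono inter_subset_left)
    ⟨mem_ball_self (X.hT.pos hv.2), mem_ball_self (X.hT.pos hv'.2)⟩ h.eT ⟨hx, (aux x).2 hx'⟩
  exact (X.hT.diff hv'.2).comp (by fun_prop) (fun t ht => (aux t).1 ht.2)

lemma Closes.moved {y : ℂ} {δ : ℝ} (hδ : ∀ x, δ ≤ X.dS x + X.dT (y - x)) {v v' v1 v1' : Vtx}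
    (h : X.Closes y v v') (hv : X.VGood y v) (hv' : X.VGood y v') {w : ℂ} (hw : ‖w‖ < δ / 16)
    (m : X.Moved y δ w v v1) (m' : X.Moved y δ w v' v1') : X.Closes (y + w) v1 v1' := by
  have hz : v1'.z = v1.z + X.p := by rw [m'.z, m.z, h.pos]
  have q1 := mem_dom.1 (pos_dom hδ hv hw)
  have q2 := mem_dom.1 (pos_dom hδ hv' hw)
  rw [← m.z] at q1
  rw [← m'.z] at q2
  have ez : y + w - v1'.z = y + w - v1.z - X.p := by rw [hz]; ring
  refine ⟨hz, ?_, ?_⟩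
  · have e1 : (fun x => v1'.φ (x + X.p)) =ᶠ[𝓝 v1.z] (fun x => v'.φ (x + X.p)) := by
      have := m'.eS
      rw [hz] at this
      have c : Tendsto (fun x => x + X.p) (𝓝 v1.z) (𝓝 (v1.z + X.p)) :=
        (continuous_id.add continuous_const).tendsto _
      exact c.eventually this
    exact (e1.trans (h.spreadS hv hv' q1.1 (by rw [← hz]; exact q2.1))).trans m.eS.symm
  · have e1 : (fun x => v1'.ψ (x - X.p)) =ᶠ[𝓝 (y + w - v1.z)] (fun x => v'.ψ (x - X.p)) := by
      have := m'.eT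
      rw [ez] at this
      have c : Tendsto (fun x => x - X.p) (𝓝 (y + w - v1.z)) (𝓝 (y + w - v1.z - X.p)) :=
        (continuous_id.sub continuous_const).tendsto _
      exact c.eventually this
    exact (e1.trans (h.spreadT hv hv' q1.2 (by rw [← ez]; exact q2.2))).trans m.eT.symm

lemma Closes.int {y : ℂ} {δ : ℝ} (hδ : ∀ x, δ ≤ X.dS x + X.dT (y - x)) {v v' : Vtx}
    (h : X.Closes y v v') (hv : X.VGood y v) (hv' : X.VGood y v') {w : ℂ} (hw : ‖w‖ < δ / 16) :
    ∀ᶠ Y in 𝓝 (y + w), segInt (v'.integrand Y) (X.pos y δ v' w) (X.pos y δ v' (Y - y)) =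
      segInt (v.integrand Y) (X.pos y δ v w) (X.pos y δ v (Y - y)) := by
  have ee : y + w - y = w := by ring
  have h1 := pos_dom hδ hv hw
  have h2 := pos_dom hδ hv' hw
  have c1 := dom_eventually (x := fun _ => X.pos y δ v w) continuousAt_const h1
  have c2 := dom_eventually (x := fun Y => X.pos y δ v (Y - y)) (pos_continuous.continuousAt)
    (Y0 := y + w) (y := y) (v := v) (by simpa only [ee] using h1)
  have c3 := dom_eventually (x := fun _ => X.pos y δ v' w) continuousAt_const h2
  have c4 := dom_eventually (x := fun Y => X.pos y δ v' (Y - y)) (pos_continuous.continuousAt)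
    (Y0 := y + w) (y := y) (v := v') (by simpa only [ee] using h2)
  filter_upwards [c1, c2, c3, c4] with Y a1 a2 a3 a4
  rw [h.pos] at a3 a4
  rw [h.pos, h.pos, segInt_shift]
  have hc : Convex ℝ (X.dom y v Y ∩ (fun x => x + X.p) ⁻¹' X.dom y v' Y) :=
    convex_dom.inter (convex_dom.translate_preimage_left X.p)
  refine segInt_congr hc ?_ ⟨a1, a3⟩ ⟨a2, a4⟩
  rintro x ⟨hx, hx'⟩
  rw [mem_preimage] at hx'
  rw [mem_dom] at hx hx'
  have k1 := (h.spreadS hv hv' hx.1 hx'.1).eq_of_nhds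
  have k2 := (h.spreadT hv hv' hx.2 (by
    rw [show Y - x - X.p = Y - (x + X.p) by ring]; exact hx'.2)).eq_of_nhds
  simp only [Vtx.integrand]
  rw [← k1, ← k2, show Y - x - X.p = Y - (x + X.p) by ring]

/-- The basic step: a state at `y` extends to a holomorphic function on a ball of definite size. -/
theorem State.step {y : ℂ} {δ : ℝ} (hδ : ∀ x, δ ≤ X.dS x + X.dT (y - x)) (hδ0 : 0 < δ)
    {I : ℂ → ℂ} (h : X.State y I) :
    ∃ J : ℂ → ℂ, DifferentiableOn ℂ J (ball y (δ / 16)) ∧ J =ᶠ[𝓝 y] I ∧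
      ∀ y' ∈ ball y (δ / 16), X.State y' J := by
  obtain ⟨ε, v, v', I0, c, e0, cl⟩ := h
  obtain ⟨I1, c1, e1⟩ := c.refine (ε' := δ / 16) (by linarith)
  obtain ⟨J, hJ, hJ0, hJw⟩ := c1.move hδ hδ0
  have hv := c.good_left
  have hv' := c.good_right
  refine ⟨J, hJ, ?_, ?_⟩
  · have := cl.int hδ hv hv' (w := 0) (by simp; linarith)
    rw [add_zero] at this
    filter_upwards [hJ0, this, e0, e1] with Y a b c d
    linear_combination a + b + c + d
  · intro y' hy'
    obtain ⟨w, rfl⟩ : ∃ w, y' = y + w := ⟨y' - y, by ring⟩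
    have hw : ‖w‖ < δ / 16 := by simpa [mem_ball, dist_eq_norm] using hy'
    obtain ⟨v1, m⟩ := exists_moved hδ hv hw
    obtain ⟨v1', I', m', c', ev⟩ := hJw w hw v1 m
    refine ⟨δ, v1, v1', I', c', ?_, cl.moved hδ hv hv' hw m m'⟩
    filter_upwards [ev, cl.int hδ hv hv' hw] with Y a b
    linear_combination -a - b

end Setup
end HadamardCont


namespace HadamardCont
open Set Metric Topology MeasureTheory

theorem continue_of_step {St : ℂ → (ℂ → ℂ) → Prop} {η : ℝ → ℂ} (hη : ContinuousOn η (Icc 0 1))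
    {r : ℝ} (hr : 0 < r)
    (step : ∀ t ∈ Icc (0:ℝ) 1, ∀ I, St (η t) I → ∃ J : ℂ → ℂ,
      DifferentiableOn ℂ J (ball (η t) r) ∧ J =ᶠ[𝓝 (η t)] I ∧ ∀ y' ∈ ball (η t) r, St y' J)
    {φ : ℂ → ℂ} (h0 : St (η 0) φ) : ∃ F, AnalyticContinuationAlong φ η F := by
  obtain ⟨ε, hε, hu⟩ := Metric.uniformContinuousOn_iff.1
    (isCompact_Icc.uniformContinuousOn_of_continuous hη) r hr
  obtain ⟨n, hn⟩ := exists_nat_one_div_lt hε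
  set N : ℝ := n + 1 with hN
  have N0 : 0 < N := by positivity
  let τ : ℕ → ℝ := fun k => min (k / N) 1
  have hτ : ∀ k, τ k ∈ Icc (0:ℝ) 1 := fun k => ⟨le_min (by positivity) zero_le_one, min_le_right _ _⟩
  have hτ0 : τ 0 = 0 := by simp [τ]
  choose! J hJd hJe hJs using step
  let K : ℕ → ℂ → ℂ := fun k => Nat.rec (J 0 φ) (fun k L => J (τ (k + 1)) L) k
  have K0 : K 0 = J 0 φ := rfl
  have KS : ∀ k, K (k + 1) = J (τ (k + 1)) (K k) := fun k => rfl
  have hclose : ∀ k, dist (η (τ (k + 1))) (η (τ k)) < r := by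
    intro k
    refine hu _ (hτ _) _ (hτ _) (lt_of_le_of_lt ?_ hn)
    have e : ((k + 1 : ℕ) : ℝ) / N = k / N + 1 / N := by push_cast; ring
    have : 0 < 1 / N := by positivity
    simp only [τ, e]
    rw [Real.dist_eq, abs_le]
    constructor
    · have : min ((k:ℝ) / N) 1 ≤ min ((k:ℝ) / N + 1 / N) 1 := min_le_min_right _ (by linarith)
      linarith
    · have : min ((k:ℝ) / N + 1 / N) 1 ≤ min ((k:ℝ) / N) 1 + 1 / N := by
        rw [← min_add_add_right]
        exact min_le_min_left _ (by linarith)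
      linarith
  have inv : ∀ k, DifferentiableOn ℂ (K k) (ball (η (τ k)) r) ∧
      ∀ y' ∈ ball (η (τ k)) r, St y' (K k) := by
    intro k
    induction k with
    | zero =>
      rw [hτ0, K0]
      exact ⟨hJd 0 (by simp) φ h0, hJs 0 (by simp) φ h0⟩
    | succ k ih =>
      have := ih.2 _ (hclose k)
      exact ⟨hJd _ (hτ _) _ this, hJs _ (hτ _) _ this⟩
  have eqs : ∀ k, K (k + 1) =ᶠ[𝓝 (η (τ (k + 1)))] K k := fun k =>
    hJe _ (hτ _) _ ((inv k).2 _ (hclose k))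
  refine ⟨fun t => K ⌊t * N⌋₊, ?_, ?_, ?_⟩
  · intro t ht
    have b1 := Nat.floor_le (show 0 ≤ t * N from mul_nonneg ht.1 N0.le)
    have b2 := Nat.lt_floor_add_one (t * N)
    have b3 : (⌊t * N⌋₊ : ℝ) / N ≤ t := by rwa [div_le_iff₀ N0]
    have b4 : t < (⌊t * N⌋₊ : ℝ) / N + 1 / N := by rw [← add_div, lt_div_iff₀ N0]; exact b2
    have e : τ ⌊t * N⌋₊ = (⌊t * N⌋₊ : ℝ) / N := min_eq_left (b3.trans ht.2)
    refine (inv _).1.analyticAt (isOpen_ball.mem_nhds ?_)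
    refine hu _ ht _ (hτ _) (lt_of_le_of_lt ?_ hn)
    rw [Real.dist_eq, abs_le, e]
    constructor <;> linarith
  · simp only [zero_mul, Nat.floor_zero]
    exact hJe 0 (by simp) φ h0
  · intro t ht
    have b1 := Nat.floor_le (show 0 ≤ t * N from mul_nonneg ht.1 N0.le)
    have b2 := Nat.lt_floor_add_one (t * N)
    have cN : Continuous (fun s : ℝ => s * N) := by fun_prop
    have ev1 : ∀ᶠ s in 𝓝[Icc 0 1] t, s * N < ⌊t * N⌋₊ + 1 :=
      nhdsWithin_le_nhds (cN.continuousAt.eventually (gt_mem_nhds b2))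
    have mem : ∀ᶠ s in 𝓝[Icc 0 1] t, s ∈ Icc (0:ℝ) 1 := eventually_mem_nhdsWithin
    rcases b1.lt_or_eq with b1 | b1
    · have ev2 : ∀ᶠ s in 𝓝[Icc 0 1] t, (⌊t * N⌋₊ : ℝ) < s * N :=
        nhdsWithin_le_nhds (cN.continuousAt.eventually (lt_mem_nhds b1))
      filter_upwards [ev1, ev2, mem] with s h1 h2 h3
      have : ⌊s * N⌋₊ = ⌊t * N⌋₊ := (Nat.floor_eq_iff (mul_nonneg h3.1 N0.le)).2 ⟨h2.le, h1⟩
      rw [this]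
    · rcases hk : ⌊t * N⌋₊ with _ | k
      · rw [hk] at ev1
        filter_upwards [ev1, mem] with s h1 h3
        have : ⌊s * N⌋₊ = 0 := (Nat.floor_eq_iff (mul_nonneg h3.1 N0.le)).2
          ⟨by simpa using mul_nonneg h3.1 N0.le, by simpa using h1⟩
        rw [this, hk]
      · rw [hk] at ev1 b1
        have ev2 : ∀ᶠ s in 𝓝[Icc 0 1] t, (k : ℝ) < s * N :=
          nhdsWithin_le_nhds (cN.continuousAt.eventually (lt_mem_nhds
            (by change (k : ℝ) < t * N; rw [← b1]; push_cast; linarith)))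
        have et : τ (k + 1) = t := by
          have : ((k + 1 : ℕ) : ℝ) / N = t := by rw [b1]; field_simp
          simp only [τ]
          rw [this, min_eq_left ht.2]
        have e1 := eqs k
        rw [et] at e1
        have e2 : ∀ᶠ s in 𝓝[Icc 0 1] t, K (k + 1) =ᶠ[𝓝 (η s)] K k :=
          (hη t ht).eventually (eventually_eventually_nhds.2 e1)
        filter_upwards [ev1, ev2, e2, mem] with s h1 h2 h4 h3
        rcases le_or_gt ((k + 1 : ℕ) : ℝ) (s * N) with h | h
        · have : ⌊s * N⌋₊ = k + 1 := (Nat.floor_eq_iff (mul_nonneg h3.1 N0.le)).2 ⟨h, h1⟩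
          rw [this, hk]
        · have : ⌊s * N⌋₊ = k := (Nat.floor_eq_iff (mul_nonneg h3.1 N0.le)).2
            ⟨h2.le, by push_cast at h; exact h⟩
          rw [this, hk]
          exact h4.symm

end HadamardCont


namespace HadamardCont
open Set Metric Topology MeasureTheory

open Classical in
/-- Distance to `S`, with value `1` when `S` is empty. -/
noncomputable def dset (S : Set ℂ) (z : ℂ) : ℝ := if S.Nonempty then infDist z S else 1

lemma dset_nonneg (S : Set ℂ) (z : ℂ) : 0 ≤ dset S z := by
  unfold dset; split_ifs
  · exact infDist_nonneg
  · exact zero_le_one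

lemma dset_lip (S : Set ℂ) (z z' : ℂ) : dset S z - dist z' z ≤ dset S z' := by
  unfold dset; split_ifs
  · have := infDist_le_infDist_add_dist (s := S) (x := z) (y := z')
    rw [dist_comm] at this
    linarith
  · linarith [dist_nonneg (x := z') (y := z)]

lemma dset_ball {S : Set ℂ} {z x : ℂ} (hx : x ∈ ball z (dset S z)) : x ∉ S := by
  intro h
  unfold dset at hx
  rw [if_pos ⟨x, h⟩, mem_ball] at hx
  have := infDist_le_dist_of_mem (x := z) h
  rw [dist_comm] at this
  linarith

lemma le_dset {S : Set ℂ} {z : ℂ} {r : ℝ} (hr : r ≤ 1) (h : ∀ x ∈ S, r ≤ dist z x) :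
    r ≤ dset S z := by
  unfold dset; split_ifs with hS
  · exact (le_infDist hS).2 (fun _ => h _)
  · exact hr

lemma dset_per {T : Set ℂ} {p : ℂ} (hT : ∀ x, x - p ∈ T ↔ x ∈ T) (x : ℂ) :
    dset T (x - p) = dset T x := by
  have e : (fun x => x - p) '' T = T := by
    ext t
    constructor
    · rintro ⟨s, hs, rfl⟩
      exact (hT s).2 hs
    · intro ht
      exact ⟨t + p, (hT (t + p)).1 (by simpa using ht), by simp⟩
  have iso : Isometry (fun x : ℂ => x - p) := Isometry.of_dist_eq fun a b => dist_sub_right a b p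
  have := infDist_image (x := x) (t := T) iso
  rw [e] at this
  unfold dset
  rw [this]

def GoodAt (S : Set ℂ) (z : ℂ) (φ : ℂ → ℂ) : Prop :=
  0 < dset S z ∧ Good S z φ ∧ DifferentiableOn ℂ φ (ball z (dset S z))

lemma atlas (S : Set ℂ) : IsAtlas (dset S) (GoodAt S) where
  lip := dset_lip S
  diff h := h.2.2
  pos h := h.1
  ext := by
    intro z φ z' h hz'
    have hpos : 0 < dset S z' := by
      have := dset_lip S z z'
      rw [mem_ball] at hz'
      linarith
    have hseg : ∀ t ∈ Icc (0:ℝ) 1, z + t * (z' - z) ∈ ball z (dset S z) := fun t ht =>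
      seg_mem (convex_ball _ _) (mem_ball_self h.1) hz' ht
    have g := h.2.1.move isOpen_ball h.2.2 hseg (fun t ht => dset_ball (hseg t ht))
    obtain ⟨Φ, d, e⟩ := g.extend hpos (fun x hx => dset_ball hx)
    exact ⟨Φ, ⟨hpos, g.congr e.symm, d⟩, e⟩

noncomputable def setup (S T : Set ℂ) (p : ℂ) (hT : ∀ x, x - p ∈ T ↔ x ∈ T) : Setup where
  dS := dset S
  dT := dset T
  GS := GoodAt S
  GT := GoodAt T
  hS := atlas S
  hT := atlas T
  p := p
  per := dset_per hT

lemma exists_delta {S T W : Set ℂ} (hS : IsClosed S) (hT : IsClosed T) (hW : IsClosed W)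
    (hST : ∀ α ∈ S, ∀ β ∈ T, α + β ∈ W) {K : Set ℂ} (hK : IsCompact K) (hKW : Disjoint K W) :
    ∃ δ : ℝ, 0 < δ ∧ ∀ y ∈ K, ∀ x, δ ≤ dset S x + dset T (y - x) := by
  obtain ⟨δ, hδ, hsub⟩ := hK.exists_cthickening_subset_open hW.isOpen_compl
    (subset_compl_iff_disjoint_right.2 hKW)
  refine ⟨min δ 1, lt_min hδ one_pos, fun y hy x => ?_⟩
  by_cases h1 : S.Nonempty
  · by_cases h2 : T.Nonempty
    · obtain ⟨α, hα, eα⟩ := hS.exists_infDist_eq_dist h1 x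
      obtain ⟨β, hβ, eβ⟩ := hT.exists_infDist_eq_dist h2 (y - x)
      rw [dset, dset, if_pos h1, if_pos h2, eα, eβ]
      have : δ ≤ dist (α + β) y := by
        by_contra! hlt
        exact hsub (mem_cthickening_of_dist_le _ y δ K hy hlt.le) (hST α hα β hβ)
      refine (min_le_left _ _).trans (this.trans ?_)
      rw [dist_eq_norm, dist_eq_norm, dist_eq_norm, ← norm_neg,
        show -(α + β - y) = (x - α) + (y - x - β) by ring]
      exact norm_add_le _ _
    · have := dset_nonneg S x
      rw [show dset T (y - x) = 1 by simp [dset, h2]]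
      linarith [min_le_right δ 1]
  · have := dset_nonneg T (y - x)
    rw [show dset S x = 1 by simp [dset, h1]]
    linarith [min_le_right δ 1]

theorem good_of_state {S T W : Set ℂ} (hS : IsClosed S) (hT : IsClosed T) (hW : IsClosed W)
    (hST : ∀ α ∈ S, ∀ β ∈ T, α + β ∈ W) {p : ℂ} (hp : ∀ x, x - p ∈ T ↔ x ∈ T) {y : ℂ}
    {φ : ℂ → ℂ} (h : (setup S T p hp).State y φ) : Good W y φ := by
  intro η hη h0 hηW
  obtain ⟨δ, hδ0, hδ⟩ := exists_delta hS hT hW hST (isCompact_Icc.image_of_continuousOn hη)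
    (by
      rw [Set.disjoint_left]
      rintro _ ⟨t, ht, rfl⟩
      exact hηW t ht)
  refine continue_of_step (St := (setup S T p hp).State) hη (r := δ / 16) (by linarith) ?_
    (by rw [h0]; exact h)
  intro t ht I hI
  exact hI.step (hδ (η t) ⟨t, ht, rfl⟩) hδ0

end HadamardCont


namespace HadamardCont
open Set Metric Topology MeasureTheory

lemma Good.goodAt {S : Set ℂ} {z : ℂ} {φ : ℂ → ℂ} (h : Good S z φ) (hd : 0 < dset S z) :
    ∃ Φ, GoodAt S z Φ ∧ Φ =ᶠ[𝓝 z] φ := by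
  obtain ⟨Φ, d, e⟩ := h.extend hd (fun x hx => dset_ball hx)
  exact ⟨Φ, ⟨hd, h.congr e.symm, d⟩, e⟩

/-- `φ` gives good germs on `C`, whose unit neighbourhood lies in `H`. -/
structure Base (S H C : Set ℂ) (φ : ℂ → ℂ) : Prop where
  open_ : IsOpen H
  convex : Convex ℝ H
  diff : DifferentiableOn ℂ φ H
  sub : ∀ z ∈ C, ball z 1 ⊆ H
  dist : ∀ z ∈ C, 1 ≤ dset S z
  good : ∀ z ∈ C, Good S z φ

lemma Base.germ {S H C : Set ℂ} {φ Φ : ℂ → ℂ} (h : Base S H C φ) {z x : ℂ} (hz : z ∈ C)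
    (hΦ : GoodAt S z Φ) (e : Φ =ᶠ[𝓝 z] φ) (hx : x ∈ ball z 1) : Φ =ᶠ[𝓝 x] φ :=
  germ_spread isOpen_ball (convex_ball z 1) (hΦ.2.2.mono (ball_subset_ball (h.dist z hz)))
    (h.diff.mono (h.sub z hz)) (mem_ball_self one_pos) e hx

theorem init_chain {S T H C : Set ℂ} {φ ψ : ℂ → ℂ} (hS : Base S H C φ) (hT : Base T H C ψ)
    {p : ℂ} (hp : ∀ x, x - p ∈ T ↔ x ∈ T) {x y q : ℂ} (hq : ‖q‖ < 1)
    (hx : ∀ k : ℕ, x + k * q ∈ C) (hy : ∀ k : ℕ, y - (x + k * q) ∈ C) :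
    ∃ v : Vtx, v.z = x ∧ v.φ =ᶠ[𝓝 x] φ ∧ v.ψ =ᶠ[𝓝 (y - x)] ψ ∧ ∀ k : ℕ, ∃ v' I,
      (setup S T p hp).Chn y 1 v v' I ∧ v'.z = x + k * q ∧ v'.φ =ᶠ[𝓝 v'.z] φ ∧
      v'.ψ =ᶠ[𝓝 (y - v'.z)] ψ ∧
      I =ᶠ[𝓝 y] fun Y => segInt (fun u => φ u * ψ (Y - u)) x (x + k * q) := by
  have vert : ∀ k : ℕ, ∃ v : Vtx, v.z = x + k * q ∧ (setup S T p hp).VGood y v ∧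
      v.φ =ᶠ[𝓝 v.z] φ ∧ v.ψ =ᶠ[𝓝 (y - v.z)] ψ := by
    intro k
    obtain ⟨Φ, h1, h2⟩ := (hS.good _ (hx k)).goodAt (one_pos.trans_le (hS.dist _ (hx k)))
    obtain ⟨Ψ, h3, h4⟩ := (hT.good _ (hy k)).goodAt (one_pos.trans_le (hT.dist _ (hy k)))
    exact ⟨⟨x + k * q, Φ, Ψ⟩, rfl, ⟨h1, h3⟩, h2, h4⟩
  obtain ⟨v, vz, vg, vφ, vψ⟩ := vert 0
  simp only [Nat.cast_zero, zero_mul, add_zero] at vz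
  refine ⟨v, vz, by rwa [vz] at vφ, by rwa [vz] at vψ, fun k => ?_⟩
  induction k with
  | zero =>
    refine ⟨v, _, Setup.Chn.nil vg, by simpa using vz, vφ, vψ, ?_⟩
    simp [segInt]
  | succ k ih =>
    obtain ⟨v', I, c, z', eφ, eψ, eI⟩ := ih
    obtain ⟨v'', z'', g'', eφ', eψ'⟩ := vert (k + 1)
    have g' : (setup S T p hp).VGood y v' := c.good_right
    have hz : v''.z - v'.z = q := by rw [z'', z']; push_cast; ring
    have hd : dist v''.z v'.z < 1 := by rw [dist_eq_norm, hz]; exact hq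
    have hd2 : dist (y - v''.z) (y - v'.z) < 1 := by rw [Setup.dist_sub_sub]; exact hd
    have zC : v'.z ∈ C := by rw [z']; exact hx k
    have yC : y - v'.z ∈ C := by rw [z']; exact hy k
    have edge : (setup S T p hp).Edge y v' v'' :=
      ⟨hd.trans_le (hS.dist _ zC), hd.trans_le (hT.dist _ yC),
        eφ'.trans (hS.germ zC g'.1 eφ hd).symm,
        eψ'.trans (hT.germ yC g'.2 eψ hd2).symm⟩
    refine ⟨v'', _, Setup.Chn.snoc v' v'' I c g'' edge hd, z'', eφ', eψ', ?_⟩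
    have ev : ∀ u ∈ C, y - u ∈ C → ∀ᶠ Y in 𝓝 y, u ∈ H ∧ Y - u ∈ H := by
      intro u hu hyu
      have h1 : u ∈ H := hS.sub u hu (mem_ball_self one_pos)
      have h2 : y - u ∈ H := hS.sub _ hyu (mem_ball_self one_pos)
      have c : Continuous (fun Y : ℂ => Y - u) := by fun_prop
      filter_upwards [c.continuousAt.eventually (hS.open_.mem_nhds h2)] with Y hY
      exact ⟨h1, hY⟩
    have ev2 : ∀ u, dist (y - u) (y - v'.z) < 1 → ∀ᶠ Y in 𝓝 y, Y - u ∈ ball (y - v'.z) 1 := by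
      intro u hu
      have c : Continuous (fun Y : ℂ => Y - u) := by fun_prop
      exact c.continuousAt.eventually (isOpen_ball.mem_nhds hu)
    have e0 := ev x (by simpa using hx 0) (by simpa using hy 0)
    have e1 := ev v'.z zC yC
    have e2 := ev v''.z (by rw [z'']; exact hx _) (by rw [z'']; exact hy _)
    filter_upwards [eI, e0, e1, e2, ev2 v'.z (by simp), ev2 v''.z hd2] with Y aI a0 a1 a2 b1 b2
    have cv : ∀ D : Set ℂ, Convex ℝ D → Convex ℝ ((fun u : ℂ => Y - u) ⁻¹' D) := by
      intro D hD u hu w hw a b ha hb hab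
      have := hD hu hw ha hb hab
      rw [mem_preimage]
      have e : Y - (a • u + b • w) = a • (Y - u) + b • (Y - w) := by
        have : ((a : ℝ) : ℂ) + b = 1 := by exact_mod_cast hab
        simp only [Complex.real_smul]
        linear_combination -Y * this
      rw [e]; exact this
    have cont : Continuous (fun u : ℂ => Y - u) := by fun_prop
    obtain ⟨P, hP⟩ := segInt_prim (U := H ∩ (fun u : ℂ => Y - u) ⁻¹' H)
      (h := fun u => φ u * ψ (Y - u))
      (hS.open_.inter (hS.open_.preimage cont)) (hS.convex.inter (cv _ hS.convex))
      ((hS.diff.mono inter_subset_left).mul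
        (hT.diff.comp (by fun_prop) (fun u hu => hu.2)))
    have key : segInt (v'.integrand Y) v'.z v''.z =
        segInt (fun u => φ u * ψ (Y - u)) v'.z v''.z := by
      refine segInt_congr (U := ball v'.z 1 ∩ (fun u : ℂ => Y - u) ⁻¹' ball (y - v'.z) 1)
        ((convex_ball _ _).inter (cv _ (convex_ball _ _))) ?_ ⟨mem_ball_self one_pos, b1⟩ ⟨hd, b2⟩
      rintro u ⟨h1, h2⟩
      simp only [Vtx.integrand]
      rw [(hS.germ zC g'.1 eφ h1).eq_of_nhds, (hT.germ yC g'.2 eψ h2).eq_of_nhds]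
    rw [key, aI, ← z', ← z'', hP _ a0 _ a1, hP _ a0 _ a2, hP _ a1 _ a2]
    ring

theorem init_state {S T H C : Set ℂ} {φ ψ : ℂ → ℂ} (hS : Base S H C φ) (hT : Base T H C ψ)
    {p : ℂ} (hp : ∀ x, x - p ∈ T ↔ x ∈ T) {x y : ℂ} {n : ℕ} (hn : n ≠ 0) (hq : ‖p / n‖ < 1)
    (hx : ∀ k : ℕ, x + k * (p / n) ∈ C) (hy : ∀ k : ℕ, y - (x + k * (p / n)) ∈ C)
    (pφ : ∀ u, φ (u + p) = φ u) (pψ : ∀ u, ψ (u - p) = ψ u) :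
    (setup S T p hp).State y (fun Y => segInt (fun u => φ u * ψ (Y - u)) x (x + p)) := by
  obtain ⟨v, z, eφ, eψ, h⟩ := init_chain hS hT hp hq hx hy
  obtain ⟨v', I, c, z', eφ', eψ', eI⟩ := h n
  have e : (n : ℂ) * (p / n) = p := by field_simp
  rw [e] at z' eI
  refine ⟨1, v, v', I, c, eI, ⟨by rw [z', z]; rfl, ?_, ?_⟩⟩
  · have c : Tendsto (fun u => u + p) (𝓝 v.z) (𝓝 v'.z) := by
      rw [z', z]; exact (continuous_id.add continuous_const).tendsto _
    rw [← z] at eφ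
    filter_upwards [c.eventually eφ', eφ] with u h1 h2
    change v'.φ (u + p) = _
    rw [h1, h2, pφ]
  · have c : Tendsto (fun u => u - p) (𝓝 (y - v.z)) (𝓝 (y - v'.z)) := by
      rw [z', z, show y - (x + p) = y - x - p by ring]
      exact (continuous_id.sub continuous_const).tendsto _
    rw [← z] at eψ
    filter_upwards [c.eventually eψ', eψ] with u h1 h2
    change v'.ψ (u - p) = _
    rw [h1, h2, pψ]

end HadamardCont


namespace HadamardCont
open Set Metric Topology MeasureTheory

lemma seriesSum_diff (a : ℕ → ℂ) :
    DifferentiableOn ℂ (seriesSum a) {ξ | (‖ξ‖₊ : ENNReal) < radiusOf a} := by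
  intro ξ hξ
  have h0 : 0 < (FormalMultilinearSeries.ofScalars ℂ a).radius := pos_of_gt hξ
  have h := (FormalMultilinearSeries.ofScalars ℂ a).hasFPowerSeriesOnBall h0
  have e : (FormalMultilinearSeries.ofScalars ℂ a).sum = seriesSum a := by
    have := FormalMultilinearSeries.ofScalarsSum_eq_tsum (E := ℂ) a
    simp only [FormalMultilinearSeries.ofScalarsSum, smul_eq_mul] at this
    exact this
  rw [e] at h
  have hm : ξ ∈ Metric.eball (0:ℂ) (FormalMultilinearSeries.ofScalars ℂ a).radius := by
    rw [mem_eball_zero_iff]; exact hξ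
  exact (h.analyticAt_of_mem hm).differentiableAt.differentiableWithinAt

lemma series_summable {a : ℕ → ℂ} {ξ : ℂ} (h : (‖ξ‖₊ : ENNReal) < radiusOf a) :
    Summable (fun n => ‖a n * ξ ^ n‖) := by
  have := (FormalMultilinearSeries.ofScalars ℂ a).summable_norm_mul_pow h
  refine this.congr fun n => ?_
  rw [FormalMultilinearSeries.ofScalars_norm, norm_mul, norm_pow, coe_nnnorm]

lemma radius_mul_pos {a b : ℕ → ℂ} (ha : 0 < radiusOf a) (hb : 0 < radiusOf b) :
    0 < radiusOf (fun n => a n * b n) := by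
  obtain ⟨r, hr0, hr⟩ := ENNReal.lt_iff_exists_nnreal_btwn.1 (lt_min ha hb)
  obtain ⟨C, hC, h1⟩ := (FormalMultilinearSeries.ofScalars ℂ a).norm_mul_pow_le_of_lt_radius
    (hr.trans_le (min_le_left _ _))
  obtain ⟨D, hD, h2⟩ := (FormalMultilinearSeries.ofScalars ℂ b).norm_mul_pow_le_of_lt_radius
    (hr.trans_le (min_le_right _ _))
  have : ((r * r : NNReal) : ENNReal) ≤ radiusOf (fun n => a n * b n) := by
    refine FormalMultilinearSeries.le_radius_of_bound _ (C * D) fun n => ?_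
    have e1 := h1 n
    have e2 := h2 n
    rw [FormalMultilinearSeries.ofScalars_norm] at *
    have : ‖a n * b n‖ * ((r * r : NNReal) : ℝ) ^ n = (‖a n‖ * r ^ n) * (‖b n‖ * r ^ n) := by
      push_cast; rw [norm_mul]; ring
    rw [this]
    exact mul_le_mul e1 e2 (by positivity) hC.le
  refine lt_of_lt_of_le ?_ this
  have : 0 < r := by exact_mod_cast hr0
  exact_mod_cast mul_pos this this

lemma int_series {c : ℕ → ℂ} (hc : Summable fun n => ‖c n‖) {h : ℝ → ℂ} (hh : Continuous h)
    {e : ℕ → ℝ → ℂ} (he : ∀ n, Continuous (e n)) (h1 : ∀ n s, ‖e n s‖ = 1) :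
    HasSum (fun n => c n * ∫ s in (0:ℝ)..1, h s * e n s)
      (∫ s in (0:ℝ)..1, h s * ∑' n, c n * e n s) := by
  obtain ⟨M, hM⟩ := (isCompact_Icc (a := (0:ℝ)) (b := 1)).exists_bound_of_continuousOn hh.continuousOn
  have := intervalIntegral.hasSum_integral_of_dominated_convergence (μ := volume) (a := 0) (b := 1)
    (F := fun n s => c n * (h s * e n s)) (f := fun s => h s * ∑' n, c n * e n s)
    (fun n _ => ‖c n‖ * M) ?_ ?_ ?_ ?_ ?_
  · simpa [intervalIntegral.integral_const_mul] using this
  · intro n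
    have := he n
    exact (by fun_prop : Continuous fun s => c n * (h s * e n s)).aestronglyMeasurable
  · intro n
    refine Eventually.of_forall fun s hs => ?_
    rw [uIoc_of_le zero_le_one] at hs
    rw [norm_mul, norm_mul, h1, mul_one]
    exact mul_le_mul_of_nonneg_left (hM s ⟨hs.1.le, hs.2⟩) (norm_nonneg _)
  · exact Eventually.of_forall fun s _ => hc.mul_right M
  · exact intervalIntegrable_const
  · refine Eventually.of_forall fun s _ => ?_
    have : Summable fun n => c n * e n s := by
      refine Summable.of_norm (hc.congr fun n => ?_)
      rw [norm_mul, h1, mul_one]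
    refine (this.hasSum.mul_left (h s)).congr_fun ?_
    intro n
    ring

noncomputable def twoPiI : ℂ := 2 * Real.pi * Complex.I

lemma norm_exp_imag (n : ℤ) (s : ℝ) : ‖Complex.exp (n * (s * twoPiI))‖ = 1 := by
  have : (n : ℂ) * (s * twoPiI) = ((n * (s * (2 * Real.pi)) : ℝ) : ℂ) * Complex.I := by
    unfold twoPiI; push_cast; ring
  rw [this, Complex.norm_exp_ofReal_mul_I]

lemma fourier_int (n : ℤ) :
    ∫ s in (0:ℝ)..1, Complex.exp (n * (s * twoPiI)) = if n = 0 then 1 else 0 := by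
  split_ifs with h
  · simp [h]
  · have h0 : (n : ℂ) * twoPiI ≠ 0 := by
      unfold twoPiI
      have : (n : ℂ) ≠ 0 := by exact_mod_cast h
      simp [this, Real.pi_ne_zero]
    have := integral_exp_mul_complex (a := 0) (b := 1) h0
    have e : ∀ s : ℝ, (n : ℂ) * (s * twoPiI) = n * twoPiI * s := fun s => by ring
    simp only [e]
    rw [this]
    have : Complex.exp (n * twoPiI) = 1 := by
      unfold twoPiI; exact Complex.exp_int_mul_two_pi_mul_I n
    simp [this]

theorem hadamard_int {a b : ℕ → ℂ} {x Y : ℂ}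
    (hx : (‖Complex.exp x‖₊ : ENNReal) < radiusOf a)
    (hY : (‖Complex.exp (Y - x)‖₊ : ENNReal) < radiusOf b) :
    segInt (fun u => seriesSum a (Complex.exp u) * seriesSum b (Complex.exp (Y - u))) x
      (x + twoPiI) = twoPiI * seriesSum (fun n => a n * b n) (Complex.exp Y) := by
  have nE : ∀ s : ℝ, ‖Complex.exp (s * twoPiI)‖ = 1 := by
    intro s; simpa using norm_exp_imag 1 s
  have nE' : ∀ s : ℝ, ‖Complex.exp (-(s * twoPiI))‖ = 1 := by
    intro s; simpa using norm_exp_imag (-1) s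
  set G : ℝ → ℂ := fun s => seriesSum b (Complex.exp (Y - x) * Complex.exp (-(s * twoPiI))) with hG
  have cG : Continuous G := by
    rw [continuous_iff_continuousAt]
    intro s
    have hm : Complex.exp (Y - x) * Complex.exp (-(s * twoPiI)) ∈
        {ξ : ℂ | (‖ξ‖₊ : ENNReal) < radiusOf b} := by
      have : ‖Complex.exp (Y - x) * Complex.exp (-(s * twoPiI))‖₊ = ‖Complex.exp (Y - x)‖₊ := by
        ext; simp only [coe_nnnorm]; rw [norm_mul, nE', mul_one]
      rw [mem_ofPred_eq, this]; exact hY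
    have ho : IsOpen {ξ : ℂ | (‖ξ‖₊ : ENNReal) < radiusOf b} :=
      isOpen_lt (by fun_prop) continuous_const
    have := ((seriesSum_diff b).continuousOn.continuousAt (ho.mem_nhds hm))
    exact ContinuousAt.comp (f := fun s : ℝ => Complex.exp (Y - x) * Complex.exp (-(s * twoPiI)))
      this (by fun_prop)
  have inner : ∀ n : ℕ, ∫ s in (0:ℝ)..1, G s * Complex.exp (n * (s * twoPiI)) =
      b n * Complex.exp (Y - x) ^ n := by
    intro n
    have := int_series (series_summable hY) (h := fun s => Complex.exp (n * (s * twoPiI)))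
      (by fun_prop) (e := fun m s => Complex.exp (((-m : ℤ) : ℂ) * (s * twoPiI)))
      (by intro m; fun_prop) (fun m s => norm_exp_imag _ s)
    have e1 : ∀ m : ℕ, (∫ s in (0:ℝ)..1, Complex.exp (n * (s * twoPiI)) *
        Complex.exp (((-m : ℤ) : ℂ) * (s * twoPiI))) = if m = n then 1 else 0 := by
      intro m
      have := fourier_int (n - m)
      simp only [show ((n : ℤ) - m = 0) ↔ m = n by omega] at this
      rw [← this]
      congr 1; ext s
      rw [← Complex.exp_add]; congr 1; push_cast; ring
    simp only [e1] at this
    have h2 := this.tsum_eq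
    rw [tsum_eq_single n (by intro m hm; simp [hm])] at h2
    simp only [if_true, mul_one] at h2
    rw [h2]
    congr 1; ext s
    rw [mul_comm, hG]
    simp only [seriesSum]
    congr 1
    refine tsum_congr fun m => ?_
    rw [mul_pow, ← Complex.exp_nat_mul (-(↑s * twoPiI)), mul_assoc]
    congr 3
    push_cast; ring
  have outer := int_series (series_summable hx) cG
    (e := fun n s => Complex.exp (((n : ℤ) : ℂ) * (s * twoPiI)))
    (by intro m; fun_prop) (fun m s => norm_exp_imag _ s)
  simp only [Int.cast_natCast, inner] at outer
  have : seriesSum (fun n => a n * b n) (Complex.exp Y) =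
      ∫ s in (0:ℝ)..1, G s * ∑' n, a n * Complex.exp x ^ n * Complex.exp (n * (s * twoPiI)) := by
    rw [← outer.tsum_eq, seriesSum]
    refine tsum_congr fun n => ?_
    rw [show Y = x + (Y - x) by ring, Complex.exp_add, mul_pow, add_sub_cancel]
    ring
  rw [this, segInt, ← intervalIntegral.integral_const_mul]
  congr 1; ext s
  rw [show x + twoPiI - x = twoPiI by ring, show Y - (x + s * twoPiI) = (Y - x) + -(s * twoPiI) by ring,
    Complex.exp_add (Y - x), Complex.exp_add x]
  have : seriesSum a (Complex.exp x * Complex.exp (s * twoPiI)) =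
      ∑' n, a n * Complex.exp x ^ n * Complex.exp (n * (s * twoPiI)) := by
    rw [seriesSum]
    refine tsum_congr fun n => ?_
    rw [mul_pow, ← Complex.exp_nat_mul (↑s * twoPiI), mul_assoc]
  rw [this, hG]
  ring

end HadamardCont


namespace HadamardCont
open Set Metric Topology MeasureTheory

lemma Good.const_mul {S : Set ℂ} {z : ℂ} {φ : ℂ → ℂ} (h : Good S z φ) (c : ℂ) :
    Good S z (fun y => c * φ y) := by
  intro γ hγ h0 hS
  obtain ⟨F, f1, f2, f3⟩ := h γ hγ h0 hS
  refine ⟨fun t y => c * F t y, fun t ht => analyticAt_const.mul (f1 t ht), ?_, ?_⟩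
  · filter_upwards [f2] with y hy
    rw [hy]
  · intro t ht
    filter_upwards [f3 t ht] with s hs
    filter_upwards [hs] with y hy
    rw [hy]

lemma good_exp {A : Set ℂ} {a : ℕ → ℂ} (h : ContinuableGerm A a) {x : ℂ}
    (hx : (‖Complex.exp x‖₊ : ENNReal) < radiusOf a) :
    Good (Complex.exp ⁻¹' A) x (fun u => seriesSum a (Complex.exp u)) := by
  intro γ hγ h0 hS
  obtain ⟨F, f1, f2, f3⟩ := h.2 (fun t => Complex.exp (γ t)) (Complex.continuous_exp.comp_continuousOn hγ)
    (fun t ht => hS t ht) (by rw [h0]; exact hx)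
  have ce : ∀ z, Tendsto Complex.exp (𝓝 z) (𝓝 (Complex.exp z)) := fun z =>
    Complex.continuous_exp.tendsto z
  refine ⟨fun t u => F t (Complex.exp u), ?_, ?_, ?_⟩
  · intro t ht
    exact AnalyticAt.comp (f1 t ht) (by fun_prop)
  · exact (ce _).eventually f2
  · intro t ht
    filter_upwards [f3 t ht] with s hs
    exact (ce _).eventually hs

lemma base_exp {A : Set ℂ} {a : ℕ → ℂ} (h : ContinuableGerm A a) {L : ℝ}
    (h1 : ∀ ξ : ℂ, ‖ξ‖ < Real.exp L → (‖ξ‖₊ : ENNReal) < radiusOf a)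
    (h2 : ∀ α ∈ A, ‖α‖ < Real.exp L → α = 0) :
    Base (Complex.exp ⁻¹' A) {z | z.re < L} {z | z.re ≤ L - 1}
      (fun u => seriesSum a (Complex.exp u)) where
  open_ := isOpen_lt Complex.continuous_re continuous_const
  convex := convex_halfSpace_re_lt L
  diff := by
    refine (seriesSum_diff a).comp (by fun_prop) ?_
    intro z hz
    refine h1 _ ?_
    rw [Complex.norm_exp]
    exact Real.exp_lt_exp.2 hz
  sub := by
    intro z hz x hx
    have h3 := Complex.abs_re_le_norm (x - z)
    rw [mem_ball, dist_eq_norm] at hx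
    have h4 := le_abs_self (x - z).re
    rw [Complex.sub_re] at *
    change z.re ≤ L - 1 at hz
    change x.re < L
    linarith
  dist := by
    intro z hz
    refine le_dset le_rfl fun x hx => ?_
    have hn : Real.exp L ≤ ‖Complex.exp x‖ := by
      by_contra! hlt
      exact Complex.exp_ne_zero x (h2 _ hx hlt)
    rw [Complex.norm_exp, Real.exp_le_exp] at hn
    have h3 := Complex.abs_re_le_norm (x - z)
    rw [dist_comm, dist_eq_norm]
    have h4 := le_abs_self (x - z).re
    rw [Complex.sub_re] at *
    change z.re ≤ L - 1 at hz
    linarith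
  good := by
    intro z hz
    refine good_exp h (h1 _ ?_)
    rw [Complex.norm_exp]
    change z.re ≤ L - 1 at hz
    exact Real.exp_lt_exp.2 (by linarith)

lemma twoPiI_ne : twoPiI ≠ 0 := by unfold twoPiI; simp [Real.pi_ne_zero]

lemma exp_add_twoPiI (x : ℂ) : Complex.exp (x + twoPiI) = Complex.exp x := Complex.exp_periodic x

lemma exp_sub_twoPiI (x : ℂ) : Complex.exp (x - twoPiI) = Complex.exp x :=
  Complex.exp_periodic.sub_eq x

theorem good_hadamard {A B : Set ℂ} {a b : ℕ → ℂ} (hA : IsClosed A) (hB : IsClosed B)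
    (hAB : IsClosed ({0} ∪ A * B : Set ℂ))
    (ha : ContinuableGerm A a) (hb : ContinuableGerm B b) {L : ℝ}
    (h1 : ∀ ξ : ℂ, ‖ξ‖ < Real.exp L → (‖ξ‖₊ : ENNReal) < radiusOf a)
    (h2 : ∀ α ∈ A, ‖α‖ < Real.exp L → α = 0)
    (h1' : ∀ ξ : ℂ, ‖ξ‖ < Real.exp L → (‖ξ‖₊ : ENNReal) < radiusOf b)
    (h2' : ∀ α ∈ B, ‖α‖ < Real.exp L → α = 0) {y : ℂ} (hy : y.re ≤ 2 * (L - 1)) :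
    Good (Complex.exp ⁻¹' ({0} ∪ A * B)) y
      (fun u => seriesSum (fun n => a n * b n) (Complex.exp u)) := by
  have hre : ∀ k : ℕ, (((L - 1 : ℝ) : ℂ) + k * (twoPiI / (7 : ℕ))).re = L - 1 := by
    intro k
    have : (k : ℂ) * (twoPiI / (7 : ℕ)) = ((k * (2 * Real.pi / 7) : ℝ) : ℂ) * Complex.I := by
      unfold twoPiI; push_cast; ring
    rw [this, Complex.add_re, Complex.re_ofReal_mul, Complex.I_re, Complex.ofReal_re, mul_zero,
      add_zero]
  have st := init_state (base_exp ha h1 h2) (base_exp hb h1' h2') (p := twoPiI)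
    (by intro x; rw [mem_preimage, mem_preimage, exp_sub_twoPiI])
    (x := ((L - 1 : ℝ) : ℂ)) (y := y) (n := 7) (by norm_num)
    (by
      have : twoPiI / (7 : ℕ) = ((2 * Real.pi / 7 : ℝ) : ℂ) * Complex.I := by
        unfold twoPiI; push_cast; ring
      rw [this, norm_mul, Complex.norm_I, mul_one, Complex.norm_real, Real.norm_of_nonneg
        (by positivity)]
      linarith [Real.pi_lt_d2])
    (fun k => (hre k).le)
    (fun k => by
      change (y - _).re ≤ L - 1
      rw [Complex.sub_re, hre]; linarith)
    (fun u => by simp only [exp_add_twoPiI]) (fun u => by simp only [exp_sub_twoPiI])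
  have g := good_of_state (W := Complex.exp ⁻¹' ({0} ∪ A * B)) (hA.preimage Complex.continuous_exp)
    (hB.preimage Complex.continuous_exp) (hAB.preimage Complex.continuous_exp)
    (by
      intro α hα β hβ
      rw [mem_preimage, Complex.exp_add]
      exact Or.inr (Set.mul_mem_mul hα hβ)) _ st
  refine (g.const_mul twoPiI⁻¹).congr ?_
  have ev : ∀ᶠ Y : ℂ in 𝓝 y, Y.re < 2 * L - 1 :=
    (isOpen_lt Complex.continuous_re continuous_const).mem_nhds (by change y.re < 2 * L - 1; linarith)
  filter_upwards [ev] with Y hY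
  rw [hadamard_int (a := a) (b := b), inv_mul_cancel_left₀ twoPiI_ne]
  · refine h1 _ ?_
    rw [Complex.norm_exp, Complex.ofReal_re]
    exact Real.exp_lt_exp.2 (by linarith)
  · refine h1' _ ?_
    rw [Complex.norm_exp, Complex.sub_re, Complex.ofReal_re]
    exact Real.exp_lt_exp.2 (by linarith)

end HadamardCont

namespace HadamardCont
open Set Metric Topology MeasureTheory

lemma closed_disc_of_finite {S : Set ℂ} (h : ∀ R : ℝ, (S ∩ closedBall 0 R).Finite) :
    IsClosed S ∧ IsDiscrete S := by
  rw [isClosed_and_discrete_iff]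
  intro x
  rw [Filter.disjoint_principal_right]
  have hfin : ((S ∩ closedBall 0 (‖x‖ + 1)) \ {x}).Finite := (h _).subset diff_subset
  have h1 : ((S ∩ closedBall 0 (‖x‖ + 1)) \ {x})ᶜ ∈ 𝓝 x :=
    hfin.isClosed.isOpen_compl.mem_nhds (by simp)
  have h2 : ball x 1 ∈ 𝓝 x := ball_mem_nhds x one_pos
  rw [mem_nhdsWithin_iff_eventually]
  filter_upwards [h1, h2] with y hy1 hy2 hyx hyS
  apply hy1
  refine ⟨⟨hyS, ?_⟩, hyx⟩
  rw [mem_closedBall_zero_iff]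
  rw [mem_ball, dist_eq_norm] at hy2
  have := norm_add_le (y - x) x
  simp only [sub_add_cancel] at this
  linarith

lemma exists_gap {A : Set ℂ} (hA : IsClosed A) (hd : DiscreteTopology A) :
    ∃ r > 0, ∀ α ∈ A, ‖α‖ < r → α = 0 := by
  have h := (isClosed_and_discrete_iff.1 ⟨hA, isDiscrete_iff_discreteTopology.2 hd⟩) 0
  rw [Filter.disjoint_principal_right, mem_nhdsWithin_iff_eventually,
    Metric.eventually_nhds_iff_ball] at h
  obtain ⟨r, hr, h⟩ := h
  refine ⟨r, hr, fun α hα hn => ?_⟩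
  by_contra hne
  exact h α (by simpa using hn) hne hα

lemma finite_ball {A : Set ℂ} (hA : IsClosed A) (hd : DiscreteTopology A) (R : ℝ) :
    (A ∩ closedBall 0 R).Finite :=
  ((isCompact_closedBall 0 R).inter_left hA).finite
    ((isDiscrete_iff_discreteTopology.2 hd).mono inter_subset_left)

lemma finite_prod {A B : Set ℂ} (hA : IsClosed A) (hB : IsClosed B)
    (hdA : DiscreteTopology A) (hdB : DiscreteTopology B) (R : ℝ) :
    ((({0} : Set ℂ) ∪ A * B) ∩ closedBall 0 R).Finite := by
  obtain ⟨r, hr, hrA⟩ := exists_gap hA hdA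
  obtain ⟨s, hs, hsB⟩ := exists_gap hB hdB
  have hf : ((({0} : Set ℂ) ∪ (A ∩ closedBall 0 (R / s)) * (B ∩ closedBall 0 (R / r)))).Finite :=
    (finite_singleton 0).union ((finite_ball hA hdA _).mul (finite_ball hB hdB _))
  refine hf.subset ?_
  rintro x ⟨hx | hx, hxR⟩
  · exact Or.inl hx
  · obtain ⟨α, hα, β, hβ, rfl⟩ := hx
    by_cases hα0 : α = 0
    · left; simp [hα0]
    by_cases hβ0 : β = 0
    · left; simp [hβ0]
    have h1 : r ≤ ‖α‖ := by
      by_contra hc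
      exact hα0 (hrA α hα (not_le.1 hc))
    have h2 : s ≤ ‖β‖ := by
      by_contra hc
      exact hβ0 (hsB β hβ (not_le.1 hc))
    right
    simp only [mem_closedBall_zero_iff, norm_mul] at hxR
    refine ⟨α, ⟨hα, ?_⟩, β, ⟨hβ, ?_⟩, rfl⟩
    · rw [mem_closedBall_zero_iff, le_div_iff₀ hs]
      exact (mul_le_mul_of_nonneg_left h2 (norm_nonneg _)).trans hxR
    · rw [mem_closedBall_zero_iff, le_div_iff₀ hr, mul_comm]
      exact (mul_le_mul_of_nonneg_right h1 (norm_nonneg _)).trans hxR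

lemma countable_of_finite {S : Set ℂ} (h : ∀ R : ℝ, (S ∩ closedBall 0 R).Finite) :
    S.Countable := by
  have : S ⊆ ⋃ n : ℕ, S ∩ closedBall 0 (n : ℝ) := by
    intro x hx
    obtain ⟨n, hn⟩ := exists_nat_ge ‖x‖
    exact mem_iUnion.2 ⟨n, hx, by simpa using hn⟩
  exact (countable_iUnion fun n : ℕ => (h n).countable).mono this

lemma exists_L {A B : Set ℂ} (hA : IsClosed A) (hB : IsClosed B)
    (hdA : DiscreteTopology A) (hdB : DiscreteTopology B) {a b : ℕ → ℂ}
    (ha : 0 < radiusOf a) (hb : 0 < radiusOf b) : ∃ L : ℝ,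
    (∀ ξ : ℂ, ‖ξ‖ < Real.exp L → (‖ξ‖₊ : ENNReal) < radiusOf a) ∧
    (∀ α ∈ A, ‖α‖ < Real.exp L → α = 0) ∧
    (∀ ξ : ℂ, ‖ξ‖ < Real.exp L → (‖ξ‖₊ : ENNReal) < radiusOf b) ∧
    (∀ α ∈ B, ‖α‖ < Real.exp L → α = 0) := by
  obtain ⟨r, hr, hrA⟩ := exists_gap hA hdA
  obtain ⟨s, hs, hsB⟩ := exists_gap hB hdB
  obtain ⟨p, hp0, hp⟩ := ENNReal.lt_iff_exists_nnreal_btwn.1 ha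
  obtain ⟨q, hq0, hq⟩ := ENNReal.lt_iff_exists_nnreal_btwn.1 hb
  have hp0' : (0:ℝ) < p := by exact_mod_cast hp0
  have hq0' : (0:ℝ) < q := by exact_mod_cast hq0
  have hm : 0 < min (min r s) (min (p:ℝ) q) := by positivity
  refine ⟨Real.log (min (min r s) (min (p:ℝ) q)), ?_⟩
  rw [Real.exp_log hm]
  simp only [lt_min_iff]
  refine ⟨fun ξ h => lt_trans ?_ hp, fun α hα h => hrA α hα h.1.1,
    fun ξ h => lt_trans ?_ hq, fun α hα h => hsB α hα h.1.2⟩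
  · exact_mod_cast h.2.1
  · exact_mod_cast h.2.2

lemma exists_lift {γ : ℝ → ℂ} (hγ : ContinuousOn γ (Icc 0 1)) (h0 : ∀ t ∈ Icc (0:ℝ) 1, γ t ≠ 0) :
    ∃ η : ℝ → ℂ, Continuous η ∧ ∀ t ∈ Icc (0:ℝ) 1, Complex.exp (η t) = γ t := by
  let g : C(unitInterval, {z : ℂ // z ≠ 0}) :=
    ⟨fun t => ⟨γ t, h0 t t.2⟩, by
      apply Continuous.subtype_mk
      exact continuousOn_iff_continuous_restrict.1 hγ⟩
  obtain ⟨Γ, hΓ, -⟩ := Complex.isCoveringMap_exp.exists_path_lifts g (Complex.log (γ 0)) (by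
    apply Subtype.ext
    simp only [g, ContinuousMap.coe_mk]
    rw [Complex.exp_log]
    · simp
    · exact h0 0 (by simp))
  refine ⟨fun t => Γ (projIcc 0 1 zero_le_one t), Γ.continuous.comp continuous_projIcc, ?_⟩
  intro t ht
  have := congrFun hΓ ⟨t, ht⟩
  have := congrArg Subtype.val this
  simpa [g, projIcc_of_mem zero_le_one ht] using this

lemma exists_seg {W : Set ℂ} (hW : W.Countable) {z : ℂ} (hz : z ∉ W) {M : ℝ} (hM : M < z.re) :
    ∃ y : ℂ, y.re = M ∧ ∀ t ∈ Icc (0:ℝ) 1, y + t * (z - y) ∉ W := by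
  let Θ : ℂ → ℂ := fun w => z - (z - w) * ((z.re - M) / (z - w).re : ℝ)
  have hc : (Θ '' W).Countable := hW.image Θ
  have hinj : Function.Injective (fun θ : ℝ => (⟨M, θ⟩ : ℂ)) := by
    intro x y h
    simpa using h
  have hc' := hc.preimage hinj
  obtain ⟨θ, hθ⟩ : ∃ θ : ℝ, (⟨M, θ⟩ : ℂ) ∉ Θ '' W := by
    by_contra! hcon
    apply Cardinal.not_countable_real
    refine hc'.mono fun θ _ => hcon θ
  refine ⟨⟨M, θ⟩, rfl, fun t ht hw => ?_⟩
  rcases eq_or_lt_of_le ht.2 with h1 | h1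
  · apply hz
    convert hw using 1
    rw [h1]; push_cast; ring
  · apply hθ
    refine ⟨_, hw, ?_⟩
    have e : z - ((⟨M, θ⟩ : ℂ) + t * (z - ⟨M, θ⟩)) = ((1 - t : ℝ) : ℂ) * (z - ⟨M, θ⟩) := by
      push_cast; ring
    simp only [Θ]
    rw [e, Complex.re_ofReal_mul]
    have h3 : (z - (⟨M, θ⟩ : ℂ)).re = z.re - M := by simp
    rw [h3]
    have h4 : (1 - t) ≠ 0 := by linarith
    have h5 : z.re - M ≠ 0 := by linarith
    have h6 : (z.re - M) / ((1 - t) * (z.re - M)) = (1 - t)⁻¹ := by field_simp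
    rw [h6]
    have h7 : ((1 - t : ℝ) : ℂ) ≠ 0 := by exact_mod_cast h4
    rw [mul_right_comm, Complex.ofReal_inv, mul_inv_cancel₀ h7]
    ring

lemma push_down {f : ℂ → ℂ} {γ η : ℝ → ℂ} (hη : Continuous η)
    (he : ∀ t ∈ Icc (0:ℝ) 1, Complex.exp (η t) = γ t) {F : ℝ → ℂ → ℂ}
    (hF : AnalyticContinuationAlong (fun u => f (Complex.exp u)) η F) :
    ∃ G, AnalyticContinuationAlong f γ G := by
  have hγ0 : ∀ t ∈ Icc (0:ℝ) 1, γ t ≠ 0 := fun t ht => by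
    rw [← he t ht]; exact Complex.exp_ne_zero _
  have hlog : ∀ t ∈ Icc (0:ℝ) 1, AnalyticAt ℂ (fun ξ => η t + Complex.log (ξ / γ t)) (γ t) := by
    intro t ht
    refine analyticAt_const.add (AnalyticAt.clog (analyticAt_id.div analyticAt_const (hγ0 t ht)) ?_)
    simp [hγ0 t ht]
  have hval : ∀ t ∈ Icc (0:ℝ) 1, η t + Complex.log (γ t / γ t) = η t := by
    intro t ht
    simp [hγ0 t ht]
  have htend : ∀ t ∈ Icc (0:ℝ) 1,
      Tendsto (fun ξ => η t + Complex.log (ξ / γ t)) (𝓝 (γ t)) (𝓝 (η t)) := by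
    intro t ht
    have := (hlog t ht).continuousAt.tendsto
    rwa [hval t ht] at this
  have hexp : ∀ t ∈ Icc (0:ℝ) 1, ∀ ξ : ℂ, ξ ≠ 0 →
      Complex.exp (η t + Complex.log (ξ / γ t)) = ξ := by
    intro t ht ξ hξ
    rw [Complex.exp_add, he t ht, Complex.exp_log (div_ne_zero hξ (hγ0 t ht)),
      mul_div_cancel₀ _ (hγ0 t ht)]
  refine ⟨fun t ξ => F t (η t + Complex.log (ξ / γ t)), ?_, ?_, ?_⟩
  · intro t ht
    refine AnalyticAt.comp' (g := F t) ?_ (hlog t ht)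
    rw [hval t ht]
    exact hF.1 t ht
  · have h0 : (0:ℝ) ∈ Icc (0:ℝ) 1 := by simp
    filter_upwards [(htend 0 h0).eventually hF.2.1, eventually_ne_nhds (hγ0 0 h0)] with ξ h1 h2
    rw [h1, hexp 0 h0 ξ h2]
  · intro t ht
    have hc : ∀ᶠ s in 𝓝[Icc (0:ℝ) 1] t, dist (η s) (η t) < 1 :=
      nhdsWithin_le_nhds (hη.continuousAt.eventually (ball_mem_nhds (η t) one_pos))
    filter_upwards [hF.2.2 t ht, hc, self_mem_nhdsWithin] with s h1 h2 hs
    filter_upwards [(htend s hs).eventually h1, eventually_ne_nhds (hγ0 s hs),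
      (htend s hs).eventually (ball_mem_nhds (η s) one_pos)] with ξ h3 h4 h5
    rw [h3]
    congr 1
    set u := η s + Complex.log (ξ / γ s) with hu
    have hd : dist u (η t) < 2 := by
      have := dist_triangle u (η s) (η t)
      have h5' : dist u (η s) < 1 := h5
      linarith
    have him : |(u - η t).im| < 2 := by
      rw [dist_eq_norm] at hd
      exact (Complex.abs_im_le_norm _).trans_lt hd
    rw [abs_lt] at him
    have hpi := Real.pi_gt_three
    have e : Complex.exp (u - η t) = ξ / γ t := by
      rw [Complex.exp_sub, he t ht, hexp s hs ξ h4]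
    rw [← e, Complex.log_exp (by linarith) (by linarith)]
    ring

theorem main (A B : Set ℂ) 
    (hA : IsClosed A) (hB : IsClosed B)
    (hdA : DiscreteTopology A) (hdB : DiscreteTopology B)
    (a b : ℕ → ℂ)
    (hf : ContinuableGerm A a) (hg : ContinuableGerm B b) :
    IsClosed ({0} ∪ A * B : Set ℂ) ∧
    DiscreteTopology ({0} ∪ A * B : Set ℂ) ∧
    ContinuableGerm ({0} ∪ A * B) (fun n => a n * b n) := by
  have hfin := finite_prod hA hB hdA hdB
  obtain ⟨hcl, hdisc⟩ := closed_disc_of_finite hfin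
  refine ⟨hcl, isDiscrete_iff_discreteTopology.1 hdisc, radius_mul_pos hf.1 hg.1, ?_⟩
  intro γ hγ hγΩ hγr
  obtain ⟨L, h1, h2, h1', h2'⟩ := exists_L hA hB hdA hdB hf.1 hg.1
  obtain ⟨η, hη, he⟩ := exists_lift hγ (fun t ht h => hγΩ t ht (Or.inl h))
  have hW : (Complex.exp ⁻¹' ({0} ∪ A * B)).Countable := (countable_of_finite hfin).preimage_cexp
  have hηW : ∀ t ∈ Icc (0:ℝ) 1, η t ∉ Complex.exp ⁻¹' ({0} ∪ A * B) := by
    intro t ht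
    rw [mem_preimage, he t ht]
    exact hγΩ t ht
  have h0 : (0:ℝ) ∈ Icc (0:ℝ) 1 := by simp
  obtain ⟨y, hy, hseg⟩ := exists_seg hW (hηW 0 h0)
    (M := min (2 * (L - 1)) ((η 0).re - 1)) ((min_le_right _ _).trans_lt (by linarith))
  have hgood := good_hadamard hA hB hcl hf hg h1 h2 h1' h2' (y := y) (hy.le.trans (min_le_left _ _))
  set D : Set ℂ := {ξ | (‖ξ‖₊ : ENNReal) < radiusOf (fun n => a n * b n)} with hD
  have hDo : IsOpen D := by
    apply isOpen_lt _ continuous_const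
    exact ENNReal.continuous_coe.comp continuous_nnnorm
  have hgood' : Good (Complex.exp ⁻¹' ({0} ∪ A * B)) (η 0)
      (fun u => seriesSum (fun n => a n * b n) (Complex.exp u)) := by
    refine Good.move (V := Complex.exp ⁻¹' D) (hDo.preimage Complex.continuous_exp) hgood ?_ ?_ hseg
    · exact (seriesSum_diff _).comp Complex.differentiable_exp.differentiableOn (fun u hu => hu)
    · intro t ht
      have hyre : y.re ≤ (η 0).re := by
        have := min_le_right (2 * (L - 1)) ((η 0).re - 1)
        linarith
      have hre : (y + t * (η 0 - y)).re ≤ (η 0).re := by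
        rw [Complex.add_re, Complex.re_ofReal_mul, Complex.sub_re]
        nlinarith [ht.1, ht.2]
      have hn : ‖Complex.exp (y + t * (η 0 - y))‖₊ ≤ ‖γ 0‖₊ := by
        rw [← NNReal.coe_le_coe, coe_nnnorm, coe_nnnorm, ← he 0 h0, Complex.norm_exp,
          Complex.norm_exp]
        exact Real.exp_le_exp.2 hre
      exact lt_of_le_of_lt (ENNReal.coe_le_coe.2 hn) hγr
  obtain ⟨F, hF⟩ := hgood' η hη.continuousOn rfl hηW
  exact push_down hη he hF

end HadamardCont

/-- **Theorem A.** If `f` is an `A`-continuable germ and `g` a `B`-continuable germ,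
with `A`, `B` non-empty closed discrete subsets of `ℂ`, then `Ω := {0} ∪ A·B` is closed
and discrete and the Hadamard product `f ⊙ g` is an `Ω`-continuable germ. -/
theorem hadamard_product_continuable
    (A B : Set ℂ) (hA : A.Nonempty) (hB : B.Nonempty)
    (hAclosed : IsClosed A) (hBclosed : IsClosed B)
    (hAdisc : DiscreteTopology A) (hBdisc : DiscreteTopology B)
    (a b : ℕ → ℂ)
    (hf : ContinuableGerm A a) (hg : ContinuableGerm B b) :
    IsClosed ({0} ∪ A * B : Set ℂ) ∧
    DiscreteTopology ({0} ∪ A * B : Set ℂ) ∧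
    ContinuableGerm ({0} ∪ A * B) (fun n => a n * b n) := by
  exact HadamardCont.main A B hAclosed hBclosed hAdisc hBdisc a b hf hg
end

section
/- Let f(ξ) = Σ_{n≥0} aₙξⁿ and g(ξ) = Σ_{n≥0} bₙξⁿ be power series with radii of convergence R_f > 0 and R_g > 0. For any ρ with 0 < ρ < R_f and any ξ ∈ ℂ with |ξ| < ρ·R_g, the Hadamard product satisfies f ⊙ g(ξ) = (1/(2πi)) ∮_{C_ρ} f(ζ) g(ξ/ζ) dζ/ζ, where C_ρ is the positively oriented circle of radius ρ centred at 0, parametrized by s ∈ [0,1] ↦ ζ = ρ e^{2πis}. -/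
lemma summable_of_radiusOf (a : ℕ → ℂ) (r : NNReal) (h : (r : ENNReal) < radiusOf a) :
    Summable (fun n => ‖a n‖ * (r : ℝ) ^ n) := by
  have := (FormalMultilinearSeries.ofScalars ℂ a).summable_norm_mul_pow h
  simpa [FormalMultilinearSeries.ofScalars_norm] using this

lemma term_integral (a b : ℕ → ℂ) (ρ : ℝ) (hρ0 : 0 < ρ) (ξ : ℂ) (n m : ℕ) :
    circleIntegral (fun ζ => (a n * ζ ^ n) * (b m * (ξ / ζ) ^ m) / ζ) 0 ρ =
      if n = m then (2 * (Real.pi : ℂ) * Complex.I) * (a n * b n * ξ ^ n) else 0 := by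
  have h : circleIntegral (fun ζ => (a n * ζ ^ n) * (b m * (ξ / ζ) ^ m) / ζ) 0 ρ =
      circleIntegral (fun ζ => (a n * b m * ξ ^ m) * (ζ - 0) ^ ((n : ℤ) - m - 1)) 0 ρ := by
    refine circleIntegral.integral_congr hρ0.le ?_
    intro z hz
    have hz0 : z ≠ 0 := by
      rintro rfl
      simp at hz
      exact hρ0.ne hz
    simp only [sub_zero]
    rw [zpow_sub₀ hz0, zpow_sub₀ hz0]
    simp only [zpow_natCast, zpow_one, div_pow]
    field_simp
  rw [h, circleIntegral.integral_const_mul]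
  split_ifs with hnm
  · subst hnm
    have : ((n : ℤ) - n - 1) = -1 := by ring
    simp only [this, zpow_neg_one]
    rw [circleIntegral.integral_sub_center_inv 0 hρ0.ne']
    ring
  · rw [circleIntegral.integral_sub_zpow_of_ne (by omega)]
    simp

/-- The classical integral representation of the Hadamard product: for `0 < ρ < R_f` and
`|ξ| < ρ·R_g`, one has `f ⊙ g (ξ) = (1/(2πi)) ∮_{C_ρ} f(ζ) g(ξ/ζ) dζ/ζ` where `C_ρ` is
the positively oriented circle of radius `ρ` centred at `0`. -/
theorem hadamard_circle_integral (a b : ℕ → ℂ)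
    (ha : 0 < radiusOf a) (hb : 0 < radiusOf b)
    (ρ : ℝ) (hρ0 : 0 < ρ) (hρ : ENNReal.ofReal ρ < radiusOf a)
    (ξ : ℂ) (hξ : (‖ξ‖₊ : ENNReal) < ENNReal.ofReal ρ * radiusOf b) :
    seriesSum (fun n => a n * b n) ξ =
      (2 * (Real.pi : ℂ) * Complex.I)⁻¹ *
        circleIntegral (fun ζ => seriesSum a ζ * seriesSum b (ξ / ζ) / ζ) 0 ρ := by
  have hA : Summable (fun n => ‖a n‖ * ρ ^ n) := by
    have := summable_of_radiusOf a ρ.toNNReal hρ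
    simpa [Real.coe_toNNReal _ hρ0.le] using this
  have hB : Summable (fun n => ‖b n‖ * (‖ξ‖ / ρ) ^ n) := by
    have hr : ((‖ξ‖₊ / ρ.toNNReal : NNReal) : ENNReal) < radiusOf b := by
      rw [ENNReal.coe_div (by simpa using hρ0)]
      refine ENNReal.div_lt_of_lt_mul' hξ
    have := summable_of_radiusOf b _ hr
    simpa [Real.coe_toNNReal _ hρ0.le] using this
  have hAB : Summable (fun p : ℕ × ℕ => (‖a p.1‖ * ρ ^ p.1) * (‖b p.2‖ * (‖ξ‖ / ρ) ^ p.2)) :=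
    hA.mul_of_nonneg hB (fun n => by positivity) (fun n => by positivity)
  have hnorm : ∀ θ, ‖circleMap 0 ρ θ‖ = ρ := fun θ => by simp [abs_of_pos hρ0]
  have hne : ∀ θ, circleMap 0 ρ θ ≠ 0 := fun θ => circleMap_ne_center hρ0.ne'
  have key : HasSum (fun p : ℕ × ℕ =>
      circleIntegral (fun ζ => (a p.1 * ζ ^ p.1) * (b p.2 * (ξ / ζ) ^ p.2) / ζ) 0 ρ)
      (circleIntegral (fun ζ => seriesSum a ζ * seriesSum b (ξ / ζ) / ζ) 0 ρ) := by
    unfold circleIntegral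
    refine intervalIntegral.hasSum_integral_of_dominated_convergence
      (fun p _ => (‖a p.1‖ * ρ ^ p.1) * (‖b p.2‖ * (‖ξ‖ / ρ) ^ p.2)) ?_ ?_ ?_ ?_ ?_
    · intro p
      refine Continuous.aestronglyMeasurable ?_
      simp only [deriv_circleMap]
      have hc := continuous_circleMap 0 ρ
      have hd : Continuous (fun θ => ξ / circleMap 0 ρ θ) := continuous_const.div hc hne
      have h1 : Continuous (fun θ => (a p.1 * circleMap 0 ρ θ ^ p.1) *
          (b p.2 * (ξ / circleMap 0 ρ θ) ^ p.2) / circleMap 0 ρ θ) :=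
        ((continuous_const.mul (hc.pow _)).mul (continuous_const.mul (hd.pow _))).div hc hne
      exact (hc.mul continuous_const).smul h1
    · intro p
      refine Filter.Eventually.of_forall fun θ _ => le_of_eq ?_
      simp only [deriv_circleMap, norm_smul, norm_mul, norm_div, norm_pow, hnorm, Complex.norm_I]
      field_simp
    · exact Filter.Eventually.of_forall fun θ _ => hAB
    · exact intervalIntegrable_const
    · refine Filter.Eventually.of_forall fun θ _ => ?_
      have h1 : Summable (fun n => ‖a n * circleMap 0 ρ θ ^ n‖) := by
        simpa only [norm_mul, norm_pow, hnorm] using hA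
      have h2 : Summable (fun n => ‖b n * (ξ / circleMap 0 ρ θ) ^ n‖) := by
        simpa only [norm_mul, norm_pow, norm_div, hnorm] using hB
      have h0 := summable_mul_of_summable_norm h1 h2
      have h3 : HasSum (fun p : ℕ × ℕ => (a p.1 * circleMap 0 ρ θ ^ p.1) *
          (b p.2 * (ξ / circleMap 0 ρ θ) ^ p.2))
          (seriesSum a (circleMap 0 ρ θ) * seriesSum b (ξ / circleMap 0 ρ θ)) := by
        unfold seriesSum
        rw [tsum_mul_tsum_of_summable_norm h1 h2]
        exact h0.hasSum
      exact (h3.div_const _).const_smul _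
  simp only [term_integral a b ρ hρ0 ξ] at key
  have hinj : Function.Injective (fun n : ℕ => (n, n)) := fun x y h => (Prod.mk.inj h).1
  have hoff : ∀ p ∉ Set.range (fun n : ℕ => (n, n)),
      (if p.1 = p.2 then (2 * (Real.pi : ℂ) * Complex.I) * (a p.1 * b p.1 * ξ ^ p.1) else 0) = 0 := by
    rintro ⟨n, m⟩ h
    refine if_neg fun e => h ⟨n, ?_⟩
    simp only at e
    rw [e]
  replace key := (hinj.hasSum_iff hoff).2 key
  · have h2 := key.mul_left (2 * (Real.pi : ℂ) * Complex.I)⁻¹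
    rw [← h2.tsum_eq]
    unfold seriesSum
    refine tsum_congr fun n => ?_
    simp only [Function.comp, if_true]
    rw [inv_mul_cancel_left₀ Complex.two_pi_I_ne_zero]
end

section
/- Let A and B be non-empty closed discrete subsets of ℂ, A' := A∖{0}, B' := B∖{0}, Ω := {0} ∪ (A'·B'), and let γ : [0,1] → ℂ∖Ω be a C¹ path whose derivative γ' is Lipschitz. Suppose c : [0,1] × ℂ → ℂ is locally Lipschitz, satisfies |c(t,ζ)| ≤ K|ζ| for some K > 0, and satisfies: c(t,α) = 0 for all t ∈ [0,1] and α ∈ {0} ∪ A', and c(t, γ(t)/β) = 1/β for all t ∈ [0,1] and β ∈ B'. Then the flow maps Ψ_t := Φ^{0,t} of the non-autonomous vector field X(t,z) := c(t,z)γ'(t) form a deformation of the identity adapted to γ: each Ψ_t is a (locally Lipschitz) homeomorphism of ℂ, Ψ₀ = Id_ℂ, Ψ_t(α) = α for all α ∈ {0} ∪ A' and t ∈ [0,1], and Ψ_t(γ(0)/β) = γ(t)/β for all β ∈ B' and t ∈ [0,1]. -/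
open scoped Pointwise

/-- Two-sided Grönwall estimate on `[a, b]`. -/
lemma gron_two_sided {f f' : ℝ → ℂ} {M a b : ℝ} (hab : a ≤ b)
    (hf : ∀ s ∈ Set.Icc a b, HasDerivWithinAt f (f' s) (Set.Icc a b) s)
    (hb : ∀ s ∈ Set.Icc a b, ‖f' s‖ ≤ M * ‖f s‖) :
    ‖f b‖ ≤ ‖f a‖ * Real.exp (M * (b - a)) ∧ ‖f a‖ ≤ ‖f b‖ * Real.exp (M * (b - a)) := by
  have hc : ContinuousOn f (Set.Icc a b) := fun s hs => (hf s hs).continuousWithinAt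
  constructor
  · have := norm_le_gronwallBound_of_norm_deriv_right_le (f := f) (f' := f') (δ := ‖f a‖)
      (K := M) (ε := 0) hc
      (fun x hx => (hf x ⟨hx.1, hx.2.le⟩).mono_of_mem_nhdsWithin (Icc_mem_nhdsGE_of_mem hx)) le_rfl
      (fun x hx => by simpa using hb x ⟨hx.1, hx.2.le⟩) b ⟨hab, le_rfl⟩
    rwa [gronwallBound_ε0] at this
  · have hm : Set.MapsTo (fun s => a + b - s) (Set.Icc a b) (Set.Icc a b) := by
      intro s hs
      constructor <;> [linarith [hs.2]; linarith [hs.1]]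
    have hd : ∀ s ∈ Set.Icc a b,
        HasDerivWithinAt (fun s => f (a + b - s)) (-f' (a + b - s)) (Set.Icc a b) s := by
      intro s hs
      have h1 : HasDerivWithinAt (fun s : ℝ => a + b - s) (-1) (Set.Icc a b) s :=
        ((hasDerivAt_id s).const_sub (a + b)).hasDerivWithinAt
      have := (hf _ (hm hs)).scomp s h1 hm
      simpa [Function.comp_def] using this
    have := norm_le_gronwallBound_of_norm_deriv_right_le (f := fun s => f (a + b - s))
      (f' := fun s => -f' (a + b - s)) (δ := ‖f b‖) (K := M) (ε := 0)
      (fun s hs => (hd s hs).continuousWithinAt)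
      (fun x hx => (hd x ⟨hx.1, hx.2.le⟩).mono_of_mem_nhdsWithin (Icc_mem_nhdsGE_of_mem hx))
      (by simp)
      (fun x hx => by simpa using hb _ (hm ⟨hx.1, hx.2.le⟩)) b ⟨hab, le_rfl⟩
    rw [gronwallBound_ε0] at this
    simpa using this

/-- Coordinatewise truncation. -/
noncomputable def trunc (R : ℝ) (z : ℂ) : ℂ := ⟨max (-R) (min R z.re), max (-R) (min R z.im)⟩

lemma clamp_dist (R x y : ℝ) : |max (-R) (min R x) - max (-R) (min R y)| ≤ |x - y| := by
  have := ((LipschitzWith.id.const_min R).const_max (-R)).dist_le_mul x y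
  simpa [Real.dist_eq] using this

lemma clamp_abs {R : ℝ} (hR : 0 ≤ R) (x : ℝ) : |max (-R) (min R x)| ≤ |x| := by
  have := clamp_dist R x 0
  simpa [hR] using this

lemma clamp_abs' {R : ℝ} (hR : 0 ≤ R) (x : ℝ) : |max (-R) (min R x)| ≤ R := by
  rw [abs_le]
  exact ⟨le_max_left _ _, max_le (by linarith) (min_le_left _ _)⟩

lemma trunc_dist (R : ℝ) (z w : ℂ) : ‖trunc R z - trunc R w‖ ≤ 2 * ‖z - w‖ := by
  have h1 := Complex.norm_le_abs_re_add_abs_im (trunc R z - trunc R w)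
  have h2 := clamp_dist R z.re w.re
  have h3 := clamp_dist R z.im w.im
  have h4 := Complex.abs_re_le_norm (z - w)
  have h5 := Complex.abs_im_le_norm (z - w)
  simp only [Complex.sub_re, Complex.sub_im] at h1 h4 h5
  simp only [trunc] at h1 ⊢
  linarith

lemma trunc_norm_le {R : ℝ} (hR : 0 ≤ R) (z : ℂ) : ‖trunc R z‖ ≤ ‖z‖ := by
  rw [← sq_le_sq₀ (norm_nonneg _) (norm_nonneg _), Complex.sq_norm, Complex.sq_norm,
    Complex.normSq_apply, Complex.normSq_apply]
  have h1 := abs_mul_abs_self (trunc R z).re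
  have h2 := abs_mul_abs_self (trunc R z).im
  have h3 := abs_mul_abs_self z.re
  have h4 := abs_mul_abs_self z.im
  have h5 : |(trunc R z).re| ≤ |z.re| := clamp_abs hR _
  have h6 : |(trunc R z).im| ≤ |z.im| := clamp_abs hR _
  have h7 := mul_self_le_mul_self (abs_nonneg _) h5
  have h8 := mul_self_le_mul_self (abs_nonneg _) h6
  linarith

lemma trunc_norm_le' {R : ℝ} (hR : 0 ≤ R) (z : ℂ) : ‖trunc R z‖ ≤ 2 * R := by
  have h1 := Complex.norm_le_abs_re_add_abs_im (trunc R z)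
  have h5 : |(trunc R z).re| ≤ R := clamp_abs' hR _
  have h6 : |(trunc R z).im| ≤ R := clamp_abs' hR _
  linarith

lemma trunc_eq {R : ℝ} {z : ℂ} (h : ‖z‖ ≤ R) : trunc R z = z := by
  have h4 := abs_le.1 ((Complex.abs_re_le_norm z).trans h)
  have h5 := abs_le.1 ((Complex.abs_im_le_norm z).trans h)
  apply Complex.ext
  · simp [trunc, h4.1, h4.2]
  · simp [trunc, h5.1, h5.2]

section flow
variable {X : ℝ → ℂ → ℂ} {M : ℝ}

lemma sol_bound (hM : 0 ≤ M)
    (hX : ∀ t ∈ Set.Icc (0:ℝ) 1, ∀ z, ‖X t z‖ ≤ M * ‖z‖)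
    {T : ℝ} (hT : T ≤ 1) {f : ℝ → ℂ}
    (hf : ∀ s ∈ Set.Icc 0 T, HasDerivWithinAt f (X s (f s)) (Set.Icc 0 T) s)
    {a b : ℝ} (ha : 0 ≤ a) (hab : a ≤ b) (hb : b ≤ T) :
    ‖f b‖ ≤ ‖f a‖ * Real.exp M ∧ ‖f a‖ ≤ ‖f b‖ * Real.exp M := by
  have hsub : Set.Icc a b ⊆ Set.Icc 0 T := Set.Icc_subset_Icc ha hb
  have := gron_two_sided (f := f) (f' := fun s => X s (f s)) (M := M) hab
    (fun s hs => (hf s (hsub hs)).mono hsub)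
    (fun s hs => hX s ⟨(hsub hs).1, (hsub hs).2.trans hT⟩ _)
  have he : Real.exp (M * (b - a)) ≤ Real.exp M :=
    Real.exp_le_exp.2 (mul_le_of_le_one_right hM (by linarith))
  exact ⟨this.1.trans (by gcongr), this.2.trans (by gcongr)⟩

lemma sol_diff (hM : 0 ≤ M)
    (hX : ∀ t ∈ Set.Icc (0:ℝ) 1, ∀ z, ‖X t z‖ ≤ M * ‖z‖)
    (hL : ∀ R : ℝ, ∃ C : ℝ, 0 ≤ C ∧ ∀ t ∈ Set.Icc (0:ℝ) 1, ∀ z w, ‖z‖ ≤ R → ‖w‖ ≤ R →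
      ‖X t z - X t w‖ ≤ C * ‖z - w‖) (r : ℝ) :
    ∃ C : ℝ, 0 ≤ C ∧ ∀ T, 0 ≤ T → T ≤ 1 → ∀ f g : ℝ → ℂ,
      (∀ s ∈ Set.Icc 0 T, HasDerivWithinAt f (X s (f s)) (Set.Icc 0 T) s) →
      (∀ s ∈ Set.Icc 0 T, HasDerivWithinAt g (X s (g s)) (Set.Icc 0 T) s) →
      ‖f 0‖ ≤ r → ‖g 0‖ ≤ r →
      ‖f T - g T‖ ≤ ‖f 0 - g 0‖ * C ∧ ‖f 0 - g 0‖ ≤ ‖f T - g T‖ * C := by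
  obtain ⟨C, hC, hCL⟩ := hL (r * Real.exp M)
  refine ⟨Real.exp C, (Real.exp_pos _).le, fun T hT0 hT f g hf hg hf0 hg0 => ?_⟩
  have := gron_two_sided (f := fun s => f s - g s) (f' := fun s => X s (f s) - X s (g s)) (M := C)
    hT0 (fun s hs => (hf s hs).sub (hg s hs)) (fun s hs => by
      refine hCL s ⟨hs.1, hs.2.trans hT⟩ _ _ ?_ ?_
      · exact (sol_bound hM hX hT hf le_rfl hs.1 hs.2).1.trans (by gcongr)
      · exact (sol_bound hM hX hT hg le_rfl hs.1 hs.2).1.trans (by gcongr))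
  have he : Real.exp (C * (T - 0)) ≤ Real.exp C :=
    Real.exp_le_exp.2 (mul_le_of_le_one_right hC (by linarith))
  exact ⟨this.1.trans (by gcongr), this.2.trans (by gcongr)⟩

lemma sol_unique (hM : 0 ≤ M)
    (hX : ∀ t ∈ Set.Icc (0:ℝ) 1, ∀ z, ‖X t z‖ ≤ M * ‖z‖)
    (hL : ∀ R : ℝ, ∃ C : ℝ, 0 ≤ C ∧ ∀ t ∈ Set.Icc (0:ℝ) 1, ∀ z w, ‖z‖ ≤ R → ‖w‖ ≤ R →
      ‖X t z - X t w‖ ≤ C * ‖z - w‖)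
    {T : ℝ} (hT0 : 0 ≤ T) (hT : T ≤ 1) {f g : ℝ → ℂ}
    (hf : ∀ s ∈ Set.Icc 0 T, HasDerivWithinAt f (X s (f s)) (Set.Icc 0 T) s)
    (hg : ∀ s ∈ Set.Icc 0 T, HasDerivWithinAt g (X s (g s)) (Set.Icc 0 T) s)
    : f T = g T ↔ f 0 = g 0 := by
  obtain ⟨C, hC, h⟩ := sol_diff hM hX hL (max ‖f 0‖ ‖g 0‖)
  have := h T hT0 hT f g hf hg (le_max_left _ _) (le_max_right _ _)
  constructor
  · intro h0
    rw [h0, sub_self, norm_zero, zero_mul] at this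
    exact sub_eq_zero.1 (norm_le_zero_iff.1 this.2)
  · intro h0
    rw [h0, sub_self, norm_zero, zero_mul] at this
    exact sub_eq_zero.1 (norm_le_zero_iff.1 this.1)

/-- Global existence, backward from time `T`. -/
lemma sol_exists (hM : 0 ≤ M)
    (hX : ∀ t ∈ Set.Icc (0:ℝ) 1, ∀ z, ‖X t z‖ ≤ M * ‖z‖)
    (hL : ∀ R : ℝ, ∃ C : ℝ, 0 ≤ C ∧ ∀ t ∈ Set.Icc (0:ℝ) 1, ∀ z w, ‖z‖ ≤ R → ‖w‖ ≤ R →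
      ‖X t z - X t w‖ ≤ C * ‖z - w‖)
    (hc : ∀ z, ContinuousOn (fun t => X t z) (Set.Icc 0 1))
    {T : ℝ} (hT0 : 0 ≤ T) (hT : T ≤ 1) (w : ℂ) :
    ∃ f : ℝ → ℂ, f T = w ∧
      ∀ s ∈ Set.Icc 0 T, HasDerivWithinAt f (X s (f s)) (Set.Icc 0 T) s := by
  set R : ℝ := ‖w‖ * Real.exp M with hRdef
  have hR : 0 ≤ R := by positivity
  have hsub : Set.Icc 0 T ⊆ Set.Icc (0:ℝ) 1 := Set.Icc_subset_Icc le_rfl hT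
  obtain ⟨C, hC, hCL⟩ := hL (2 * R)
  have hY : ∀ t ∈ Set.Icc (0:ℝ) 1, ∀ z, ‖X t (trunc R z)‖ ≤ M * ‖z‖ := fun t ht z =>
    (hX t ht _).trans (by gcongr; exact trunc_norm_le hR z)
  have hP : IsPicardLindelof (fun t z => X t (trunc R z)) (tmin := 0) (tmax := T)
      ⟨T, hT0, le_rfl⟩ w (Real.toNNReal (M * (2 * R))) 0 (Real.toNNReal (M * (2 * R)))
      (Real.toNNReal (C * 2)) := by
    have hMR : 0 ≤ M * (2 * R) := by positivity
    refine ⟨fun t ht => ?_, fun x _ => (hc _).mono hsub, fun t ht x _ => ?_, ?_⟩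
    · refine LipschitzOnWith.of_dist_le_mul fun x _ y _ => ?_
      rw [dist_eq_norm, dist_eq_norm, Real.coe_toNNReal _ (by positivity)]
      refine (hCL t (hsub ht) _ _ (trunc_norm_le' hR x) (trunc_norm_le' hR y)).trans ?_
      rw [mul_assoc]
      gcongr
      exact trunc_dist R x y
    · rw [Real.coe_toNNReal _ hMR]
      exact (hX t (hsub ht) _).trans (by gcongr; exact trunc_norm_le' hR x)
    · rw [Real.coe_toNNReal _ hMR]
      simp only [sub_self, sub_zero, NNReal.coe_zero]
      rw [max_eq_right hT0]
      exact mul_le_of_le_one_right hMR hT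
  obtain ⟨f, hfT, hf⟩ := hP.exists_eq_forall_mem_Icc_hasDerivWithinAt₀
  simp only at hfT hf
  refine ⟨f, hfT, fun s hs => ?_⟩
  have hb := (sol_bound (X := fun t z => X t (trunc R z)) hM hY hT hf hs.1 hs.2 le_rfl).2
  rw [hfT] at hb
  have := hf s hs
  rwa [trunc_eq hb] at this

end flow

/-- **Corollary 3.2.** Let `A`, `B` be non-empty closed discrete subsets of `ℂ`,
`A' := A ∖ {0}`, `B' := B ∖ {0}`, `Ω := {0} ∪ A'·B'`, and let `γ : [0,1] → ℂ ∖ Ω` be a `C¹`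
path with Lipschitz derivative `γ'`. Suppose `c : [0,1] × ℂ → ℂ` is locally Lipschitz,
satisfies `|c(t,ζ)| ≤ K|ζ|` for some `K > 0`, vanishes at points of `{0} ∪ A'`, and
satisfies `c(t, γ(t)/β) = 1/β` for `β ∈ B'`. Then the flow maps `Ψ_t := Φ^{0,t}` of the
vector field `X(t,z) := c(t,z)·γ'(t)` form a deformation of the identity adapted to `γ`:
each `Ψ_t` is a locally Lipschitz homeomorphism of `ℂ`, `Ψ₀ = Id`, `Ψ_t` fixes every point
of `{0} ∪ A'`, and `Ψ_t(γ(0)/β) = γ(t)/β` for every `β ∈ B'`. -/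
theorem deformation_of_identity_from_flow
    (A B : Set ℂ) (hA : A.Nonempty) (hB : B.Nonempty)
    (hAclosed : IsClosed A) (hBclosed : IsClosed B)
    (hAdisc : DiscreteTopology A) (hBdisc : DiscreteTopology B)
    (γ γ' : ℝ → ℂ)
    (hγderiv : ∀ t ∈ Set.Icc (0:ℝ) 1, HasDerivWithinAt γ (γ' t) (Set.Icc (0:ℝ) 1) t)
    (L : NNReal) (hγ'lip : LipschitzOnWith L γ' (Set.Icc 0 1))
    (hγΩ : ∀ t ∈ Set.Icc (0:ℝ) 1, γ t ∉ ({0} ∪ (A \ {0}) * (B \ {0}) : Set ℂ))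
    (c : ℝ → ℂ → ℂ) (K : ℝ) (hK : 0 < K)
    (hclip : LocallyLipschitzOn ((Set.Icc (0:ℝ) 1) ×ˢ (Set.univ : Set ℂ))
      (fun p : ℝ × ℂ => c p.1 p.2))
    (hcbound : ∀ t ∈ Set.Icc (0:ℝ) 1, ∀ ζ : ℂ, ‖c t ζ‖ ≤ K * ‖ζ‖)
    (hcA : ∀ t ∈ Set.Icc (0:ℝ) 1, ∀ α ∈ ({0} : Set ℂ) ∪ A \ {0}, c t α = 0)
    (hcB : ∀ t ∈ Set.Icc (0:ℝ) 1, ∀ β ∈ B \ ({0} : Set ℂ), c t (γ t / β) = 1 / β)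
    (Ψ : ℝ → ℂ → ℂ)
    (hΨ : ∀ ζ₀ : ℂ, Ψ 0 ζ₀ = ζ₀ ∧
      ∀ t ∈ Set.Icc (0:ℝ) 1,
        HasDerivWithinAt (fun s => Ψ s ζ₀) (c t (Ψ t ζ₀) * γ' t) (Set.Icc (0:ℝ) 1) t) :
    (∀ t ∈ Set.Icc (0:ℝ) 1, LocallyLipschitz (Ψ t) ∧ IsHomeomorph (Ψ t)) ∧
    (Ψ 0 = id) ∧
    (∀ t ∈ Set.Icc (0:ℝ) 1, ∀ α ∈ ({0} : Set ℂ) ∪ A \ {0}, Ψ t α = α) ∧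
    (∀ t ∈ Set.Icc (0:ℝ) 1, ∀ β ∈ B \ ({0} : Set ℂ), Ψ t (γ 0 / β) = γ t / β) := by
  obtain ⟨G, hG⟩ : ∃ G, ∀ t ∈ Set.Icc (0:ℝ) 1, ‖γ' t‖ ≤ G :=
    isCompact_Icc.exists_bound_of_continuousOn hγ'lip.continuousOn
  have hG0 : 0 ≤ G := (norm_nonneg _).trans (hG 0 (by simp))
  set X : ℝ → ℂ → ℂ := fun t z => c t z * γ' t with hXdef
  have hM : 0 ≤ K * G := by positivity
  have hX : ∀ t ∈ Set.Icc (0:ℝ) 1, ∀ z, ‖X t z‖ ≤ K * G * ‖z‖ := by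
    intro t ht z
    calc ‖X t z‖ = ‖c t z‖ * ‖γ' t‖ := norm_mul _ _
      _ ≤ (K * ‖z‖) * G := by
        gcongr
        · exact hcbound t ht z
        · exact hG t ht
      _ = K * G * ‖z‖ := by ring
  have hL : ∀ R : ℝ, ∃ C : ℝ, 0 ≤ C ∧ ∀ t ∈ Set.Icc (0:ℝ) 1, ∀ z w, ‖z‖ ≤ R → ‖w‖ ≤ R →
      ‖X t z - X t w‖ ≤ C * ‖z - w‖ := by
    intro R
    obtain ⟨C, hC⟩ := LocallyLipschitzOn.exists_lipschitzOnWith_of_compact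
      (isCompact_Icc.prod (isCompact_closedBall (0:ℂ) R))
      (hclip.mono (Set.prod_mono (le_refl (Set.Icc (0:ℝ) 1)) (Set.subset_univ _)))
    refine ⟨C * G, by positivity, fun t ht z w hz hw => ?_⟩
    have h1 := hC.dist_le_mul (t, z) ⟨ht, by simpa using hz⟩ (t, w) ⟨ht, by simpa using hw⟩
    simp only [dist_eq_norm, Prod.mk_sub_mk, sub_self, Prod.norm_mk, norm_zero] at h1
    rw [max_eq_right (norm_nonneg _)] at h1
    calc ‖X t z - X t w‖ = ‖c t z - c t w‖ * ‖γ' t‖ := by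
          rw [← norm_mul, sub_mul]
      _ ≤ (C * ‖z - w‖) * G := by
        gcongr
        exact hG t ht
      _ = C * G * ‖z - w‖ := by ring
  have hc : ∀ z, ContinuousOn (fun t => X t z) (Set.Icc 0 1) := by
    intro z
    refine ContinuousOn.mul ?_ hγ'lip.continuousOn
    exact hclip.continuousOn.comp (f := fun t : ℝ => (t, z)) (by fun_prop)
      (fun t ht => ⟨ht, trivial⟩)
  have hsol : ∀ T ≤ 1, ∀ ζ, ∀ s ∈ Set.Icc 0 T,
      HasDerivWithinAt (fun s => Ψ s ζ) (X s (Ψ s ζ)) (Set.Icc 0 T) s := fun T hT ζ s hs =>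
    ((hΨ ζ).2 s ⟨hs.1, hs.2.trans hT⟩).mono (Set.Icc_subset_Icc le_rfl hT)
  have h0 : ∀ ζ, Ψ 0 ζ = ζ := fun ζ => (hΨ ζ).1
  have huniq : ∀ T, 0 ≤ T → T ≤ 1 → ∀ f : ℝ → ℂ,
      (∀ s ∈ Set.Icc 0 T, HasDerivWithinAt f (X s (f s)) (Set.Icc 0 T) s) →
      Ψ T (f 0) = f T := fun T hT0 hT f hf =>
    (sol_unique hM hX hL hT0 hT (hsol T hT (f 0)) hf).2 (h0 _)
  refine ⟨fun t ht => ?_, funext h0, fun t ht α hα => ?_, fun t ht β hβ => ?_⟩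
  · have hlip : LocallyLipschitz (Ψ t) := by
      intro x
      obtain ⟨C, hC, h⟩ := sol_diff hM hX hL (‖x‖ + 1)
      refine ⟨Real.toNNReal C, Metric.ball x 1, Metric.ball_mem_nhds x one_pos,
        LipschitzOnWith.of_dist_le_mul fun y hy z hz => ?_⟩
      have hn : ∀ y ∈ Metric.ball x 1, ‖y‖ ≤ ‖x‖ + 1 := by
        intro y hy
        rw [mem_ball_iff_norm] at hy
        have := norm_le_norm_add_norm_sub' y x
        linarith
      have := (h t ht.1 ht.2 _ _ (hsol t ht.2 y) (hsol t ht.2 z)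
        (by simpa [h0] using hn y hy) (by simpa [h0] using hn z hz)).1
      simp only [h0] at this
      rw [Real.coe_toNNReal _ hC, dist_eq_norm, dist_eq_norm, mul_comm]
      exact this
    refine ⟨hlip, isHomeomorph_iff_continuous_isClosedMap_bijective.2
      ⟨hlip.continuous, ?_, ?_, ?_⟩⟩
    · refine (isProperMap_iff_tendsto_cocompact.2 ⟨hlip.continuous, ?_⟩).isClosedMap
      rw [← Metric.cobounded_eq_cocompact, ← tendsto_norm_atTop_iff_cobounded]
      have hb : ∀ ζ, ‖ζ‖ * (Real.exp (K * G))⁻¹ ≤ ‖Ψ t ζ‖ := by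
        intro ζ
        have := (sol_bound hM hX ht.2 (hsol t ht.2 ζ) le_rfl ht.1 le_rfl).2
        rw [h0] at this
        rwa [← div_eq_mul_inv, div_le_iff₀ (Real.exp_pos _)]
      exact Filter.tendsto_atTop_mono hb
        (tendsto_norm_cobounded_atTop.atTop_mul_const (by positivity))
    · intro x y hxy
      have := (sol_unique hM hX hL ht.1 ht.2 (hsol t ht.2 x) (hsol t ht.2 y)).1 hxy
      simpa [h0] using this
    · intro w
      obtain ⟨f, hfT, hf⟩ := sol_exists hM hX hL hc ht.1 ht.2 w
      exact ⟨f 0, by rw [huniq t ht.1 ht.2 f hf, hfT]⟩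
  · refine huniq t ht.1 ht.2 (fun _ => α) fun s hs => ?_
    have : X s α = 0 := by simp [hXdef, hcA s ⟨hs.1, hs.2.trans ht.2⟩ α hα]
    simp only [this]
    exact hasDerivWithinAt_const _ _ _
  · refine huniq t ht.1 ht.2 (fun s => γ s / β) fun s hs => ?_
    have hs' : s ∈ Set.Icc (0:ℝ) 1 := ⟨hs.1, hs.2.trans ht.2⟩
    have : X s (γ s / β) = γ' s / β := by
      simp only [hXdef, hcB s hs' β hβ]
      ring
    simp only [this]
    exact ((hγderiv s hs').mono (Set.Icc_subset_Icc le_rfl ht.2)).div_const β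
end

section
/- Let A and B be non-empty closed discrete subsets of ℂ, A' := A∖{0}, B' := B∖{0}, a := min{|α| : α ∈ A'}. Let γ : [0,1] → ℂ be a path and δ, M > 0 be such that for every t ∈ [0,1]: δ ≤ |γ(t)| ≤ M and |γ(t) − αβ| ≥ δ for all (α,β) ∈ A × B. If ε > 0 satisfies ε < a/2 and aδ/ε > M + (2M/a)ε, then for every β ∈ B' and every t ∈ [0,1], the distance from γ(t)/β to the set A' is at least ε. -/
/-- **Lemma 3.3.** Let `A`, `B` be non-empty closed discrete subsets of `ℂ`,
`A' := A ∖ {0}`, `B' := B ∖ {0}`, `a := min {|α| : α ∈ A'}`. Let `γ : [0,1] → ℂ` and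
`δ, M > 0` be such that `δ ≤ |γ(t)| ≤ M` and `|γ(t) − αβ| ≥ δ` for all `t ∈ [0,1]` and
`(α,β) ∈ A × B`. If `ε > 0` satisfies `ε < a/2` and `aδ/ε > M + (2M/a)ε`, then
`dist(γ(t)/β, A') ≥ ε` for every `β ∈ B'` and every `t ∈ [0,1]`. -/
theorem dist_to_A'_ge_eps
    (A B : Set ℂ) (hA : A.Nonempty) (hB : B.Nonempty)
    (hAclosed : IsClosed A) (hBclosed : IsClosed B)
    (hAdisc : DiscreteTopology A) (hBdisc : DiscreteTopology B)
    (a : ℝ) (ha : IsLeast ((fun α : ℂ => ‖α‖) '' (A \ {0})) a)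
    (γ : ℝ → ℂ) (δ M : ℝ) (hδ : 0 < δ) (hM : 0 < M)
    (hγbounds : ∀ t ∈ Set.Icc (0:ℝ) 1, δ ≤ ‖γ t‖ ∧ ‖γ t‖ ≤ M)
    (hγAB : ∀ t ∈ Set.Icc (0:ℝ) 1, ∀ α ∈ A, ∀ β ∈ B, δ ≤ ‖γ t - α * β‖)
    (ε : ℝ) (hε0 : 0 < ε) (hε1 : ε < a / 2) (hε2 : M + (2 * M / a) * ε < a * δ / ε) :
    ∀ β ∈ B \ ({0} : Set ℂ), ∀ t ∈ Set.Icc (0:ℝ) 1,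
      ε ≤ Metric.infDist (γ t / β) (A \ {0}) := by
  rintro β ⟨hβ, hβ0⟩ t ht
  have hβ0 : β ≠ 0 := hβ0
  have hne : (A \ {0}).Nonempty := by
    obtain ⟨x, hx, _⟩ := ha.1
    exact ⟨x, hx⟩
  rw [Metric.le_infDist hne]
  rintro α hα
  by_contra hlt
  rw [not_le, dist_eq_norm] at hlt
  have haα : a ≤ ‖α‖ := ha.2 ⟨α, hα, rfl⟩
  have hb : 0 < ‖β‖ := norm_pos_iff.mpr hβ0
  have ha0 : 0 < a := by linarith
  have h1 : ‖γ t - α * β‖ < ε * ‖β‖ := by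
    have : γ t - α * β = (γ t / β - α) * β := by field_simp
    rw [this, norm_mul]
    exact mul_lt_mul_of_pos_right hlt hb
  have h2 := hγAB t ht α hα.1 β hβ
  have h3 : ‖α‖ * ‖β‖ ≤ ‖γ t‖ + ‖γ t - α * β‖ := by
    rw [← norm_mul]
    have := norm_sub_le (γ t) (γ t - α * β)
    simpa using this
  have h4 := (hγbounds t ht).2
  have h5 : a * ‖β‖ ≤ ‖α‖ * ‖β‖ := mul_le_mul_of_nonneg_right haα hb.le
  have h6 : ‖β‖ ≤ 2 * M / a := by
    rw [le_div_iff₀ ha0]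
    nlinarith
  have h7 : a * δ / ε ≤ a * ‖β‖ := by
    rw [div_le_iff₀ hε0]
    nlinarith
  nlinarith
end

section
/- Let A and B be non-empty closed discrete subsets of ℂ, A' := A∖{0}, B' := B∖{0}, a := min{|α| : α ∈ A'}. Let γ : [0,1] → ℂ be a C¹ path with Lipschitz derivative and δ, M > 0 with δ ≤ |γ(t)| ≤ M and |γ(t) − αβ| ≥ δ for all (α,β) ∈ A × B and t ∈ [0,1]. Choose ε > 0 with ε < a/2 and aδ/ε > M + (2M/a)ε, set η(ζ) := min(dist(ζ, A')/ε, 1) and c(t,ζ) := η(ζ)·ζ/γ(t). Then c : [0,1] × ℂ → ℂ is locally Lipschitz, |c(t,ζ)| ≤ |ζ|/δ for all (t,ζ), c(t,α) = 0 for all t ∈ [0,1] and α ∈ {0} ∪ A', and c(t, γ(t)/β) = 1/β for all t ∈ [0,1] and β ∈ B'. -/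
lemma aux_mul {X : Type*} [PseudoMetricSpace X] {s : Set X} {f g : X → ℂ} {K1 K2 C D : ℝ}
    (hf : ∀ x ∈ s, ∀ y ∈ s, ‖f x - f y‖ ≤ K1 * dist x y)
    (hg : ∀ x ∈ s, ∀ y ∈ s, ‖g x - g y‖ ≤ K2 * dist x y)
    (hC : ∀ x ∈ s, ‖f x‖ ≤ C) (hD : ∀ x ∈ s, ‖g x‖ ≤ D) :
    ∀ x ∈ s, ∀ y ∈ s, ‖f x * g x - f y * g y‖ ≤ (C * K2 + K1 * D) * dist x y := by
  intro x hx y hy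
  have e : f x * g x - f y * g y = f x * (g x - g y) + (f x - f y) * g y := by ring
  rw [e]
  refine (norm_add_le _ _).trans ?_
  rw [norm_mul, norm_mul]
  have h1 := mul_le_mul (hC x hx) (hg x hx y hy) (norm_nonneg _)
    ((norm_nonneg _).trans (hC x hx))
  have h2 := mul_le_mul (hf x hx y hy) (hD y hy) (norm_nonneg _)
    ((norm_nonneg _).trans (hf x hx y hy))
  linarith

/-- **Section 3.2.** With `A`, `B` non-empty closed discrete, `A' := A ∖ {0}`,
`B' := B ∖ {0}`, `a := min {|α| : α ∈ A'}`, `γ : [0,1] → ℂ` a `C¹` path with Lipschitz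
derivative satisfying `δ ≤ |γ(t)| ≤ M` and `|γ(t) − αβ| ≥ δ` for all `(α,β) ∈ A × B`,
and `ε > 0` with `ε < a/2` and `aδ/ε > M + (2M/a)ε`, the function
`c(t,ζ) := η(ζ)·ζ/γ(t)`, where `η(ζ) := min(dist(ζ,A')/ε, 1)`, is locally Lipschitz on
`[0,1] × ℂ`, bounded by `|ζ|/δ`, vanishes at the points of `{0} ∪ A'`, and satisfies
`c(t, γ(t)/β) = 1/β` for every `β ∈ B'`. -/
theorem c_field_properties
    (A B : Set ℂ) (hA : A.Nonempty) (hB : B.Nonempty)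
    (hAclosed : IsClosed A) (hBclosed : IsClosed B)
    (hAdisc : DiscreteTopology A) (hBdisc : DiscreteTopology B)
    (a : ℝ) (ha : IsLeast ((fun α : ℂ => ‖α‖) '' (A \ {0})) a)
    (γ γ' : ℝ → ℂ)
    (hγderiv : ∀ t ∈ Set.Icc (0:ℝ) 1, HasDerivWithinAt γ (γ' t) (Set.Icc (0:ℝ) 1) t)
    (L : NNReal) (hγ'lip : LipschitzOnWith L γ' (Set.Icc 0 1))
    (δ M : ℝ) (hδ : 0 < δ) (hM : 0 < M)
    (hγbounds : ∀ t ∈ Set.Icc (0:ℝ) 1, δ ≤ ‖γ t‖ ∧ ‖γ t‖ ≤ M)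
    (hγAB : ∀ t ∈ Set.Icc (0:ℝ) 1, ∀ α ∈ A, ∀ β ∈ B, δ ≤ ‖γ t - α * β‖)
    (ε : ℝ) (hε0 : 0 < ε) (hε1 : ε < a / 2) (hε2 : M + (2 * M / a) * ε < a * δ / ε) :
    LocallyLipschitzOn ((Set.Icc (0:ℝ) 1) ×ˢ (Set.univ : Set ℂ))
      (fun p : ℝ × ℂ =>
        ((min (Metric.infDist p.2 (A \ {0}) / ε) 1 : ℝ) : ℂ) * p.2 / γ p.1) ∧
    (∀ t ∈ Set.Icc (0:ℝ) 1, ∀ ζ : ℂ,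
      ‖((min (Metric.infDist ζ (A \ {0}) / ε) 1 : ℝ) : ℂ) * ζ / γ t‖ ≤ ‖ζ‖ / δ) ∧
    (∀ t ∈ Set.Icc (0:ℝ) 1, ∀ α ∈ ({0} : Set ℂ) ∪ A \ {0},
      ((min (Metric.infDist α (A \ {0}) / ε) 1 : ℝ) : ℂ) * α / γ t = 0) ∧
    (∀ t ∈ Set.Icc (0:ℝ) 1, ∀ β ∈ B \ ({0} : Set ℂ),
      ((min (Metric.infDist (γ t / β) (A \ {0}) / ε) 1 : ℝ) : ℂ) * (γ t / β) / γ t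
        = 1 / β) := by
  have ha0 : 0 < a := by linarith
  have hne : (A \ {0}).Nonempty := by
    obtain ⟨α, h, _⟩ := ha.1
    exact ⟨α, h⟩
  have hη0 : ∀ ζ : ℂ, 0 ≤ min (Metric.infDist ζ (A \ {0}) / ε) 1 := fun ζ =>
    le_min (div_nonneg Metric.infDist_nonneg hε0.le) zero_le_one
  have hη1 : ∀ ζ : ℂ, ‖((min (Metric.infDist ζ (A \ {0}) / ε) 1 : ℝ) : ℂ)‖ ≤ 1 := by
    intro ζ
    rw [Complex.norm_real, Real.norm_of_nonneg (hη0 ζ)]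
    exact min_le_right _ _
  refine ⟨?_, ?_, ?_, ?_⟩
  · have hγlip : LipschitzOnWith (‖γ' 0‖₊ + L) γ (Set.Icc 0 1) := by
      refine (convex_Icc (0:ℝ) 1).lipschitzOnWith_of_nnnorm_hasDerivWithin_le hγderiv ?_
      intro t ht
      have h := hγ'lip.dist_le_mul t ht 0 ⟨le_rfl, zero_le_one⟩
      rw [dist_eq_norm, Real.dist_eq, sub_zero, abs_of_nonneg ht.1] at h
      have h2 : (L : ℝ) * t ≤ L := mul_le_of_le_one_right L.2 ht.2
      have h3 : ‖γ' t‖ ≤ ‖γ' 0‖ + ‖γ' t - γ' 0‖ := norm_le_norm_add_norm_sub' _ _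
      rw [← NNReal.coe_le_coe]
      push_cast
      linarith
    rintro ⟨t0, z0⟩ -
    set s : Set (ℝ × ℂ) := (Set.Icc (0:ℝ) 1) ×ˢ Metric.ball z0 1 with hs
    set K : ℝ := ((‖γ' 0‖₊ + L : NNReal) : ℝ) with hK
    have hK0 : 0 ≤ K := NNReal.coe_nonneg _
    have h1 : ∀ x ∈ s, ∀ y ∈ s,
        ‖((min (Metric.infDist x.2 (A \ {0}) / ε) 1 : ℝ) : ℂ)
          - ((min (Metric.infDist y.2 (A \ {0}) / ε) 1 : ℝ) : ℂ)‖ ≤ (1 / ε) * dist x y := by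
      intro x _ y _
      rw [← Complex.ofReal_sub, Complex.norm_real, Real.norm_eq_abs]
      have h := abs_min_sub_min_le_max (Metric.infDist x.2 (A \ {0}) / ε) 1
        (Metric.infDist y.2 (A \ {0}) / ε) 1
      refine h.trans ?_
      rw [sub_self, abs_zero, max_eq_left (abs_nonneg _), ← sub_div, abs_div, abs_of_pos hε0]
      have h2 := (Metric.lipschitz_infDist_pt (A \ {0})).dist_le_mul x.2 y.2
      rw [Real.dist_eq, NNReal.coe_one, one_mul] at h2
      have h3 : dist x.2 y.2 ≤ dist x y := le_max_right _ _
      rw [div_eq_inv_mul, one_div]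
      exact mul_le_mul_of_nonneg_left (h2.trans h3) (inv_nonneg.2 hε0.le)
    have h2 : ∀ x ∈ s, ∀ y ∈ s, ‖x.2 - y.2‖ ≤ 1 * dist x y := by
      intro x _ y _
      rw [one_mul, ← dist_eq_norm]
      exact le_max_right _ _
    have h2b : ∀ x ∈ s, ‖x.2‖ ≤ ‖z0‖ + 1 := by
      intro x hx
      have hb := hx.2
      rw [Metric.mem_ball, dist_eq_norm] at hb
      have h3 : ‖x.2‖ ≤ ‖z0‖ + ‖x.2 - z0‖ := norm_le_norm_add_norm_sub' _ _
      linarith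
    have h3b : ∀ x ∈ s, ‖(γ x.1)⁻¹‖ ≤ δ⁻¹ := by
      intro x hx
      rw [norm_inv]
      exact inv_anti₀ hδ (hγbounds x.1 hx.1).1
    have h3 : ∀ x ∈ s, ∀ y ∈ s, ‖(γ x.1)⁻¹ - (γ y.1)⁻¹‖ ≤ (δ⁻¹ * K * δ⁻¹) * dist x y := by
      intro x hx y hy
      have nx : γ x.1 ≠ 0 := norm_pos_iff.1 (hδ.trans_le (hγbounds x.1 hx.1).1)
      have ny : γ y.1 ≠ 0 := norm_pos_iff.1 (hδ.trans_le (hγbounds y.1 hy.1).1)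
      have e : (γ x.1)⁻¹ - (γ y.1)⁻¹ = (γ x.1)⁻¹ * (γ y.1 - γ x.1) * (γ y.1)⁻¹ := by
        field_simp
      rw [e, norm_mul, norm_mul]
      have h4 : ‖γ y.1 - γ x.1‖ ≤ K * dist x y := by
        rw [norm_sub_rev, ← dist_eq_norm]
        refine (hγlip.dist_le_mul x.1 hx.1 y.1 hy.1).trans ?_
        exact mul_le_mul_of_nonneg_left (le_max_left _ _) hK0
      calc _ ≤ δ⁻¹ * (K * dist x y) * δ⁻¹ := by
            gcongr
            · exact h3b x hx
            · exact h3b y hy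
        _ = _ := by ring
    have h12 := aux_mul h1 h2 (fun x _ => hη1 x.2) h2b
    have h12b : ∀ x ∈ s, ‖((min (Metric.infDist x.2 (A \ {0}) / ε) 1 : ℝ) : ℂ) * x.2‖
        ≤ 1 * (‖z0‖ + 1) := by
      intro x hx
      rw [norm_mul]
      exact mul_le_mul (hη1 _) (h2b x hx) (norm_nonneg _) zero_le_one
    have h123 := aux_mul h12 h3 h12b h3b
    refine ⟨Real.toNNReal (1 * (‖z0‖ + 1) * (δ⁻¹ * K * δ⁻¹) + (1 * 1 + 1 / ε * (‖z0‖ + 1)) * δ⁻¹), s, ?_, LipschitzOnWith.of_dist_le_mul fun x hx y hy => ?_⟩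
    rotate_left
    · rw [dist_eq_norm, div_eq_mul_inv, div_eq_mul_inv]
      exact (h123 x hx y hy).trans
        (mul_le_mul_of_nonneg_right (Real.le_coe_toNNReal _) dist_nonneg)
    · rw [mem_nhdsWithin]
      refine ⟨Set.univ ×ˢ Metric.ball z0 1, isOpen_univ.prod Metric.isOpen_ball, by simp, ?_⟩
      rintro ⟨u, v⟩ ⟨h, h'⟩
      exact ⟨h'.1, h.2⟩
  · intro t ht ζ
    rw [norm_div, norm_mul]
    have := mul_le_of_le_one_left (norm_nonneg ζ) (hη1 ζ)
    exact div_le_div₀ (norm_nonneg _) this hδ (hγbounds t ht).1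
  · intro t _ α hα
    rcases hα with hα | hα
    · rw [Set.mem_singleton_iff.1 hα]; simp
    · rw [Metric.infDist_zero_of_mem hα]; simp
  · intro t ht β hβ
    have hβ0 : β ≠ 0 := hβ.2
    have hb : 0 < ‖β‖ := norm_pos_iff.2 hβ0
    have nx : γ t ≠ 0 := norm_pos_iff.1 (hδ.trans_le (hγbounds t ht).1)
    have key : ε ≤ Metric.infDist (γ t / β) (A \ {0}) := by
      rw [Metric.le_infDist hne]
      intro α hα
      by_contra! hlt
      have e : ‖γ t - α * β‖ = dist (γ t / β) α * ‖β‖ := by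
        rw [dist_eq_norm, ← norm_mul, sub_mul, div_mul_cancel₀ _ hβ0]
      have h1 : ‖γ t - α * β‖ < ε * ‖β‖ := by
        rw [e]; exact mul_lt_mul_of_pos_right hlt hb
      have h2 := hγAB t ht α hα.1 β hβ.1
      have h3 : a ≤ ‖α‖ := ha.2 ⟨α, hα, rfl⟩
      have h4 : ‖α * β‖ ≤ ‖γ t‖ + ‖γ t - α * β‖ := norm_le_norm_add_norm_sub _ _
      rw [norm_mul] at h4
      have h5 := mul_le_mul_of_nonneg_right h3 hb.le
      have h6 := (hγbounds t ht).2
      have h7 : ε * ‖β‖ < a / 2 * ‖β‖ := mul_lt_mul_of_pos_right hε1 hb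
      have h8 : ‖β‖ < 2 * M / a := by
        rw [lt_div_iff₀ ha0]; linarith
      have h9 : a * δ / ε < a * ‖β‖ := by
        rw [div_lt_iff₀ hε0]; nlinarith
      have h10 : ‖β‖ * ε < 2 * M / a * ε := mul_lt_mul_of_pos_right h8 hε0
      linarith
    rw [min_eq_right ((one_le_div hε0).2 key)]
    push_cast
    field_simp
end

section
/- Let A be a non-empty closed discrete subset of ℂ with A∖{0} non-empty, and set a := min{|α| : α ∈ A∖{0}}. If f is an A-continuable holomorphic germ at 0, then the radius of convergence of f is at least a. -/
open Filter

lemma seriesSum_hasFPowerSeries (c : ℕ → ℂ) (h : 0 < radiusOf c) :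
    HasFPowerSeriesOnBall (seriesSum c) (FormalMultilinearSeries.ofScalars ℂ c) 0 (radiusOf c) := by
  have h1 := (FormalMultilinearSeries.ofScalars ℂ c).hasFPowerSeriesOnBall h
  have h2 : (FormalMultilinearSeries.ofScalars ℂ c).sum = seriesSum c := by
    funext x
    simp [FormalMultilinearSeries.sum, seriesSum, mul_comm]
  rw [h2] at h1
  exact h1

/-- Continuation along a path that stays in a domain of analyticity until its endpoint. -/
lemma continuation_eq {f : ℂ → ℂ} {γ : ℝ → ℂ} {F : ℝ → ℂ → ℂ} {R : ℝ}
    (hf : AnalyticOnNhd ℂ f (Metric.ball 0 R)) (hγ : ContinuousOn γ (Set.Icc 0 1))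
    (hF : AnalyticContinuationAlong f γ F)
    (hb : ∀ t ∈ Set.Ico (0:ℝ) 1, γ t ∈ Metric.ball (0:ℂ) R) :
    ∀ t ∈ Set.Ico (0:ℝ) 1, F t =ᶠ[nhds (γ t)] f := by
  obtain ⟨hF1, hF2, hF3⟩ := hF
  intro t ht
  have h0 : (0:ℝ) ∈ Set.Ico (0:ℝ) 1 := by simp
  have key : (F 0 =ᶠ[nhds (γ 0)] f) ↔ (F t =ᶠ[nhds (γ t)] f) := by
    refine (isPreconnected_Ico (a := (0:ℝ)) (b := 1)).induction₂
      (fun x y => (F x =ᶠ[nhds (γ x)] f) ↔ (F y =ᶠ[nhds (γ y)] f)) ?_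
      (fun x y z _ _ _ h1 h2 => h1.trans h2) (fun x y _ _ h => h.symm) h0 ht
    intro x hx
    have hx' := Set.Ico_subset_Icc_self hx
    have e1 := (hF1 x hx').eventually_analyticAt
    have e2 : ∀ᶠ z in nhds (γ x), z ∈ Metric.ball (0:ℂ) R := Metric.isOpen_ball.mem_nhds (hb x hx)
    obtain ⟨ρ, hρ, hball⟩ := Metric.eventually_nhds_iff_ball.1 (e1.and e2)
    have a1 : AnalyticOnNhd ℂ (F x) (Metric.ball (γ x) ρ) := fun z hz => (hball z hz).1
    have a2 : AnalyticOnNhd ℂ f (Metric.ball (γ x) ρ) := fun z hz => hf z (hball z hz).2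
    have pc : IsPreconnected (Metric.ball (γ x) ρ) := (convex_ball _ _).isPreconnected
    have e3 := (hF3 x hx').filter_mono (nhdsWithin_mono x Set.Ico_subset_Icc_self)
    have e4 : ∀ᶠ y in nhdsWithin x (Set.Ico (0:ℝ) 1), γ y ∈ Metric.ball (γ x) ρ :=
      ((hγ x hx').mono Set.Ico_subset_Icc_self).eventually (Metric.ball_mem_nhds _ hρ)
    filter_upwards [e3, e4] with y hy1 hy2
    constructor
    · intro h
      have := a1.eqOn_of_preconnected_of_eventuallyEq a2 pc (Metric.mem_ball_self hρ) h
      exact hy1.trans (this.eventuallyEq_of_mem (Metric.isOpen_ball.mem_nhds hy2))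
    · intro h
      have := a1.eqOn_of_preconnected_of_eventuallyEq a2 pc hy2 (hy1.symm.trans h)
      exact this.eventuallyEq_of_mem (Metric.ball_mem_nhds _ hρ)
  exact key.1 hF2

/-- Gluing local extensions across the boundary circle. -/
lemma glue {f : ℂ → ℂ} {R : ℝ} (hR : 0 < R)
    (hf : AnalyticOnNhd ℂ f (Metric.ball 0 R))
    (hloc : ∀ w : ℂ, ‖w‖ = R → ∃ ε > 0, ∃ G : ℂ → ℂ, AnalyticOnNhd ℂ G (Metric.ball w ε) ∧
      Set.EqOn G f (Metric.ball w ε ∩ Metric.ball 0 R)) :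
    ∃ R' > R, ∃ g : ℂ → ℂ, DifferentiableOn ℂ g (Metric.ball 0 R') ∧
      Set.EqOn g f (Metric.ball 0 R) := by
  classical
  choose! ε hε G hG hGf using hloc
  let B : ℂ → Set ℂ := fun w => Metric.ball w (ε w / 2)
  have hBsub : ∀ w, ‖w‖ = R → B w ⊆ Metric.ball w (ε w) := fun w hw =>
    Metric.ball_subset_ball (by linarith [hε w hw])
  have hclos : ∀ w : ℂ, ‖w‖ = R → w ∈ closure (Metric.ball (0:ℂ) R) := fun w hw => by
    rw [closure_ball _ hR.ne']; simp [hw]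
  have aux : ∀ w w' z, ‖w‖ = R → ‖w'‖ = R → ε w' ≤ ε w → z ∈ B w → z ∈ B w' → G w z = G w' z := by
    intro w w' z hw hw' hle hz hz'
    have hd : w' ∈ Metric.ball w (ε w) := by
      have h1 : dist z w < ε w / 2 := hz
      have h2 : dist z w' < ε w' / 2 := hz'
      have := dist_triangle_left w' w z
      rw [Metric.mem_ball]; linarith
    have ho : IsOpen (Metric.ball w (ε w) ∩ Metric.ball w' (ε w')) :=
      Metric.isOpen_ball.inter Metric.isOpen_ball
    obtain ⟨p, hp, hpR⟩ := mem_closure_iff.1 (hclos w' hw') _ ho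
      ⟨hd, Metric.mem_ball_self (hε w' hw')⟩
    have ev : G w =ᶠ[nhds p] G w' := by
      filter_upwards [ho.mem_nhds hp, Metric.isOpen_ball.mem_nhds hpR] with q hq hqR
      rw [hGf w hw ⟨hq.1, hqR⟩, hGf w' hw' ⟨hq.2, hqR⟩]
    exact ((hG w hw).mono Set.inter_subset_left).eqOn_of_preconnected_of_eventuallyEq
      ((hG w' hw').mono Set.inter_subset_right)
      ((convex_ball _ _).inter (convex_ball _ _)).isPreconnected hp ev
      ⟨hBsub w hw hz, hBsub w' hw' hz'⟩
  have aux' : ∀ w w' z, ‖w‖ = R → ‖w'‖ = R → z ∈ B w → z ∈ B w' → G w z = G w' z := by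
    intro w w' z hw hw' hz hz'
    rcases le_total (ε w') (ε w) with h | h
    · exact aux w w' z hw hw' h hz hz'
    · exact (aux w' w z hw' hw h hz' hz).symm
  let g : ℂ → ℂ := fun z => if z ∈ Metric.ball (0:ℂ) R then f z else
    if h : ∃ w, ‖w‖ = R ∧ z ∈ B w then G h.choose z else 0
  have hgf : Set.EqOn g f (Metric.ball 0 R) := fun z hz => by
    simp only [g]; rw [if_pos hz]
  have hgG : ∀ w, ‖w‖ = R → Set.EqOn g (G w) (B w) := by
    intro w hw z hz
    by_cases hzR : z ∈ Metric.ball (0:ℂ) R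
    · rw [hgf hzR, hGf w hw ⟨hBsub w hw hz, hzR⟩]
    · have h : ∃ w, ‖w‖ = R ∧ z ∈ B w := ⟨w, hw, hz⟩
      simp only [g]
      rw [if_neg hzR, dif_pos h]
      exact aux' _ _ _ h.choose_spec.1 hw h.choose_spec.2 hz
  let U : Set ℂ := Metric.ball 0 R ∪ ⋃ w ∈ Metric.sphere (0:ℂ) R, B w
  have hU : IsOpen U := Metric.isOpen_ball.union
    (isOpen_biUnion fun w _ => Metric.isOpen_ball)
  have hcU : Metric.closedBall (0:ℂ) R ⊆ U := by
    intro z hz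
    rcases (mem_closedBall_zero_iff.1 hz).lt_or_eq with h | h
    · exact Or.inl (mem_ball_zero_iff.2 h)
    · exact Or.inr (Set.mem_biUnion (mem_sphere_zero_iff_norm.2 h)
        (Metric.mem_ball_self (by linarith [hε z h])))
  obtain ⟨δ, hδ, hsub⟩ := (isCompact_closedBall (0:ℂ) R).exists_thickening_subset_open hU hcU
  rw [thickening_closedBall hδ hR.le] at hsub
  refine ⟨δ + R, by linarith, g, ?_, hgf⟩
  intro z hz
  apply DifferentiableAt.differentiableWithinAt
  rcases hsub hz with h | h
  · exact ((hf z h).differentiableAt).congr_of_eventuallyEq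
      (hgf.eventuallyEq_of_mem (Metric.isOpen_ball.mem_nhds h))
  · obtain ⟨w, hw, hzw⟩ := Set.mem_iUnion₂.1 h
    have hw := mem_sphere_zero_iff_norm.1 hw
    exact ((hG w hw z (hBsub w hw hzw)).differentiableAt).congr_of_eventuallyEq
      ((hgG w hw).eventuallyEq_of_mem (Metric.isOpen_ball.mem_nhds hzw))

/-- If `A` is a non-empty closed discrete subset of `ℂ` with `A ∖ {0}` non-empty and
`a := min {|α| : α ∈ A ∖ {0}}`, then every `A`-continuable germ has radius of
convergence at least `a`. -/
theorem radius_of_continuable_germ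
    (A : Set ℂ) (hA : A.Nonempty)
    (hAclosed : IsClosed A) (hAdisc : DiscreteTopology A)
    (hA' : (A \ {0} : Set ℂ).Nonempty)
    (a : ℝ) (ha : IsLeast ((fun α : ℂ => ‖α‖) '' (A \ {0})) a)
    (coeffs : ℕ → ℂ) (hf : ContinuableGerm A coeffs) :
    ENNReal.ofReal a ≤ radiusOf coeffs := by
  by_contra hlt
  rw [not_le] at hlt
  obtain ⟨hpos, hcont⟩ := hf
  have hps := seriesSum_hasFPowerSeries coeffs hpos
  obtain ⟨R, hRdef⟩ : ∃ R : ℝ, R = (radiusOf coeffs).toReal := ⟨_, rfl⟩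
  have hne : radiusOf coeffs ≠ ⊤ := (hlt.trans ENNReal.ofReal_lt_top).ne
  have hrR : radiusOf coeffs = ENNReal.ofReal R := by rw [hRdef, ENNReal.ofReal_toReal hne]
  have hR : 0 < R := by rw [hRdef]; exact ENNReal.toReal_pos hpos.ne' hne
  have hRa : R < a := by
    rw [hrR] at hlt
    exact (ENNReal.ofReal_lt_ofReal_iff_of_nonneg hR.le).1 hlt
  have hfan : AnalyticOnNhd ℂ (seriesSum coeffs) (Metric.ball 0 R) := by
    have := hps.analyticOnNhd
    rw [hrR, Metric.eball_ofReal] at this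
    exact this
  have hloc : ∀ w : ℂ, ‖w‖ = R → ∃ ε > 0, ∃ G : ℂ → ℂ, AnalyticOnNhd ℂ G (Metric.ball w ε) ∧
      Set.EqOn G (seriesSum coeffs) (Metric.ball w ε ∩ Metric.ball 0 R) := by
    intro w hw
    let γ : ℝ → ℂ := fun t => (((1 + t) / 2 : ℝ) : ℂ) * w
    have hγn : ∀ t : ℝ, 0 ≤ t → ‖γ t‖ = (1 + t) / 2 * R := by
      intro t ht
      simp only [γ]
      rw [norm_mul, hw, Complex.norm_real, Real.norm_of_nonneg (by linarith)]
    have hγc : Continuous γ := by fun_prop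
    have hγ1 : γ 1 = w := by simp [γ]
    obtain ⟨F, hF⟩ := hcont γ hγc.continuousOn (by
      intro t ht hmem
      have hn := hγn t ht.1
      have hne0 : γ t ≠ 0 := by
        rw [← norm_pos_iff, hn]; have := ht.1; positivity
      have := ha.2 ⟨γ t, ⟨hmem, hne0⟩, rfl⟩
      simp only [hn] at this
      nlinarith [ht.2]) (by
      rw [hrR, ← enorm_eq_nnnorm, ← ofReal_norm, hγn 0 le_rfl]
      exact (ENNReal.ofReal_lt_ofReal_iff hR).2 (by linarith))
    have hb : ∀ t ∈ Set.Ico (0:ℝ) 1, γ t ∈ Metric.ball (0:ℂ) R := by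
      intro t ht
      rw [mem_ball_zero_iff, hγn t ht.1]
      nlinarith [ht.2]
    have hlocal := continuation_eq hfan hγc.continuousOn hF hb
    obtain ⟨hF1, -, hF3⟩ := hF
    have h1 : (1:ℝ) ∈ Set.Icc (0:ℝ) 1 := by simp
    have han := hF1 1 h1
    rw [hγ1] at han
    obtain ⟨ε, hε, hball⟩ := Metric.eventually_nhds_iff_ball.1 han.eventually_analyticAt
    refine ⟨ε, hε, F 1, hball, ?_⟩
    have e1 := (hF3 1 h1).filter_mono (nhdsWithin_mono 1 Set.Ico_subset_Icc_self)
    have e2 : ∀ᶠ s in nhdsWithin 1 (Set.Ico (0:ℝ) 1), γ s ∈ Metric.ball w ε := by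
      have : Metric.ball w ε ∈ nhds (γ 1) := by rw [hγ1]; exact Metric.ball_mem_nhds _ hε
      exact (hγc.continuousAt.continuousWithinAt).eventually this
    have hnb : (nhdsWithin (1:ℝ) (Set.Ico (0:ℝ) 1)).NeBot := by
      rw [← mem_closure_iff_nhdsWithin_neBot, closure_Ico (by norm_num)]; exact h1
    obtain ⟨s, ⟨hs1, hs2⟩, hs3⟩ := ((e1.and e2).and self_mem_nhdsWithin).exists
    exact AnalyticOnNhd.eqOn_of_preconnected_of_eventuallyEq
      (fun z hz => hball z hz.1) (hfan.mono Set.inter_subset_right)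
      ((convex_ball _ _).inter (convex_ball _ _)).isPreconnected ⟨hs2, hb s hs3⟩
      (hs1.symm.trans (hlocal s hs3))
  obtain ⟨R', hR', g, hg, hgf⟩ := glue hR hfan hloc
  obtain ⟨r, hr1, hr2⟩ := exists_between hR'
  have hr0 : 0 < r := hR.trans hr1
  lift r to NNReal using hr0.le
  have hgp := (hg.mono (Metric.closedBall_subset_ball hr2)).hasFPowerSeriesOnBall
    (NNReal.coe_pos.1 hr0)
  have hEq := (hgp.hasFPowerSeriesAt.congr
    (hgf.eventuallyEq_of_mem (Metric.ball_mem_nhds _ hR))).eq_formalMultilinearSeries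
    hps.hasFPowerSeriesAt
  have hle := hgp.r_le
  rw [hEq] at hle
  change _ ≤ radiusOf coeffs at hle
  rw [hrR, ← ENNReal.ofReal_coe_nnreal, ENNReal.ofReal_le_ofReal_iff hR.le] at hle
  linarith
end
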